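/- arXiv:0812.4105 — 3 statements merged into one kernel-verified Lean document; each statement's English description precedes it below -/
import Mathlib

section
/- Let X ~ F and Z ~ Beta(a, b) (a, b > 0) be independent random variables with F(0) = 0, upper endpoint x_F = 1, and F in the max-domain of attraction of Ψ_γ (γ ∈ (0,∞)), and let Y := X (1 − δZ)^τ with δ ∈ (0, 1] and τ ∈ (0, ∞). Then P(Y > u) = (1+o(1)) (Γ(γ+1)Γ(a+b)/(Γ(b)Γ(γ+a+1))) · ((1−u)/(τδ))^{a} · (1 − F(u)) as u ↑ 1. -/
open MeasureTheory Filter Topology Matrix ProbabilityTheory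

noncomputable section

/-- The Euclidean norm of a vector in `ℝ^d`. -/
def eNorm {d : ℕ} (x : Fin d → ℝ) : ℝ := Real.sqrt (∑ i, x i ^ 2)

/-- `U` is uniformly distributed on the unit sphere of `ℝ^d`: it takes values in the unit
sphere and its distribution is invariant under orthogonal transformations. -/
def IsUniformOnSphere {Ω : Type*} [MeasurableSpace Ω] (P : Measure Ω) {d : ℕ}
    (U : Ω → Fin d → ℝ) : Prop :=
  Measurable U ∧ (∀ ω, eNorm (U ω) = 1) ∧
    ∀ D : Matrix (Fin d) (Fin d) ℝ, D * Dᵀ = 1 →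
      P.map (fun ω => D.mulVec (U ω)) = P.map U

/-- The density of the Beta distribution with parameters `a, b`. -/
def betaPDF (a b x : ℝ) : ℝ :=
  if 0 < x ∧ x < 1 then
    x ^ (a - 1) * (1 - x) ^ (b - 1) * (Real.Gamma (a + b) / (Real.Gamma a * Real.Gamma b))
  else 0

lemma aux_ratio (G : ℝ → ℝ) (hG : Monotone G) (hG0 : ∀ x, 0 ≤ G x)
    (hGp : ∀ x, 0 < x → 0 < G x) (γ : ℝ) (hγ : 0 < γ)
    (hlim : ∀ x : ℝ, 0 < x → Tendsto (fun e => G (x * e) / G e) (𝓝[>] 0) (𝓝 (x ^ γ)))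
    (h : ℝ → ℝ) (h0 : ℝ) (hh : Tendsto h (𝓝[>] 0) (𝓝 h0)) :
    Tendsto (fun e => G (h e * e) / G e) (𝓝[>] 0) (𝓝 ((max h0 0) ^ γ)) := by
  have hcont : Continuous (fun x : ℝ => x ^ γ) := Real.continuous_rpow_const hγ.le
  have hpos : ∀ᶠ e in 𝓝[>] (0 : ℝ), 0 < e := eventually_mem_nhdsWithin
  rw [tendsto_order]
  constructor
  · intro y hy
    by_cases h0p : 0 < h0
    · rw [max_eq_left h0p.le] at hy
      have h1 : ∀ᶠ x in 𝓝[<] h0, y < x ^ γ :=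
        (hcont.tendsto h0).mono_left nhdsWithin_le_nhds |>.eventually (lt_mem_nhds hy)
      have h2 : ∀ᶠ x in 𝓝[<] h0, 0 < x :=
        (lt_mem_nhds h0p).filter_mono nhdsWithin_le_nhds
      have h3 : ∀ᶠ x in 𝓝[<] h0, x < h0 := eventually_mem_nhdsWithin
      obtain ⟨x, hx1, hx2, hx3⟩ := (h1.and (h2.and h3)).exists
      filter_upwards [hpos, (hlim x hx2).eventually (lt_mem_nhds hx1),
        hh.eventually (lt_mem_nhds hx3)] with e he h4 h5
      refine h4.trans_le ?_
      exact div_le_div_of_nonneg_right (hG (by nlinarith)) (hG0 _)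
    · rw [max_eq_right (not_lt.1 h0p), Real.zero_rpow hγ.ne'] at hy
      exact Eventually.of_forall fun e => hy.trans_le (div_nonneg (hG0 _) (hG0 _))
  · intro y hy
    have h1 : ∀ᶠ x in 𝓝[>] (max h0 0), x ^ γ < y :=
      (hcont.tendsto _).mono_left nhdsWithin_le_nhds |>.eventually (gt_mem_nhds hy)
    have h3 : ∀ᶠ x in 𝓝[>] (max h0 0), max h0 0 < x := eventually_mem_nhdsWithin
    obtain ⟨x, hx1, hx3⟩ := (h1.and h3).exists
    have hx0 : 0 < x := (le_max_right _ _).trans_lt hx3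
    have hxh : h0 < x := (le_max_left _ _).trans_lt hx3
    filter_upwards [hpos, (hlim x hx0).eventually (gt_mem_nhds hx1),
        hh.eventually (gt_mem_nhds hxh)] with e he h4 h5
    refine lt_of_le_of_lt ?_ h4
    exact div_le_div_of_nonneg_right (hG (by nlinarith)) (hG0 _)

lemma aux_slope (δ τ w : ℝ) :
    Tendsto (fun e => (1 - (1 - e) / (1 - δ * (e * w)) ^ τ) / e) (𝓝[>] 0)
      (𝓝 (1 - τ * δ * w)) := by
  have h1 : HasDerivAt (fun e : ℝ => 1 - δ * (e * w)) (-(δ * w)) 0 := by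
    have := ((((hasDerivAt_id (0 : ℝ)).mul_const w).const_mul δ).const_sub 1)
    simpa using this
  have h2 := h1.rpow_const (p := τ) (Or.inl (by simp))
  have h3 : HasDerivAt (fun e : ℝ => 1 - e) (-1) 0 := by
    simpa using (hasDerivAt_id (0 : ℝ)).const_sub 1
  have h4 := (h3.div h2 (by simp)).const_sub 1
  have h5 := h4.tendsto_slope_zero_right
  simp at h5
  refine (h5.congr ?_).trans_eq ?_
  · intro e; ring
  · congr 1; ring

lemma aux_beta_int (a γ c : ℝ) (ha : 0 < a) (hγ : 0 < γ) (hc : 0 < c) :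
    ∫ w, (if 0 < w then w ^ (a - 1) * (max (1 - c * w) 0) ^ γ else 0) =
      Real.Gamma a * Real.Gamma (γ + 1) / Real.Gamma (γ + a + 1) / c ^ a := by
  have hγ1 : 0 < γ + 1 := by linarith
  have hb := beta_pos ha hγ1
  have h1 : ∀ w, (if 0 < w then w ^ (a - 1) * (max (1 - c * w) 0) ^ γ else 0) =
      (beta a (γ + 1) * c ^ (1 - a)) * betaPDFReal a (γ + 1) (c * w) := by
    intro w
    unfold betaPDFReal
    by_cases hw : 0 < w
    · have hcw : 0 < c * w := mul_pos hc hw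
      by_cases hw1 : c * w < 1
      · rw [if_pos hw, if_pos ⟨hcw, hw1⟩, max_eq_left (by linarith), Real.mul_rpow hc.le hw.le]
        have : c ^ (1 - a) * c ^ (a - 1) = 1 := by
          rw [← Real.rpow_add hc]; simp
        have e1 : γ + 1 - 1 = γ := by ring
        rw [e1]
        field_simp
        linear_combination (-((1 - c * w) ^ γ)) * this
      · rw [if_pos hw, if_neg (fun h => hw1 h.2), max_eq_right (by linarith),
          Real.zero_rpow hγ.ne']
        simp
    · rw [if_neg hw, if_neg (fun h => hw ((mul_pos_iff_of_pos_left hc).1 h.1))]; simp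
  simp_rw [h1]
  rw [integral_const_mul, Measure.integral_comp_mul_left]
  have h2 : ∫ y, betaPDFReal a (γ + 1) y = 1 := by
    rw [integral_eq_lintegral_of_nonneg_ae _ (by fun_prop)]
    · have := lintegral_betaPDF_eq_one ha hγ1
      unfold ProbabilityTheory.betaPDF at this
      rw [this]; simp
    · refine Eventually.of_forall fun x => ?_
      unfold betaPDFReal
      simp only [Pi.zero_apply]
      split_ifs with h
      · have := Real.rpow_nonneg h.1.le (a - 1)
        have := Real.rpow_nonneg (sub_nonneg.2 h.2.le) (γ + 1 - 1)
        positivity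
      · exact le_rfl
  rw [h2, Real.rpow_sub hc, Real.rpow_one, abs_of_pos (by positivity)]
  have : a + (γ + 1) = γ + a + 1 := by ring
  unfold beta
  rw [this]
  have := (Real.rpow_pos_of_pos hc a).ne'
  simp only [smul_eq_mul]
  field_simp

lemma aux_meas_beta (a b : ℝ) : Measurable (_root_.betaPDF a b) := by
  unfold _root_.betaPDF
  exact Measurable.ite measurableSet_Ioo (by fun_prop) (by fun_prop)

lemma aux_beta_nonneg (a b x : ℝ) (ha : 0 < a) (hb : 0 < b) : 0 ≤ _root_.betaPDF a b x := by
  unfold _root_.betaPDF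
  split_ifs with h
  · have := Real.rpow_nonneg h.1.le (a - 1)
    have := Real.rpow_nonneg (sub_nonneg.2 h.2.le) (b - 1)
    have := Real.Gamma_pos_of_pos ha
    have := Real.Gamma_pos_of_pos hb
    have := Real.Gamma_pos_of_pos (add_pos ha hb)
    positivity
  · exact le_rfl

lemma aux_prob
    {Ω : Type*} [MeasurableSpace Ω] (P : Measure Ω) [IsProbabilityMeasure P]
    (X Z : Ω → ℝ)
    (hXmeas : Measurable X) (hZmeas : Measurable Z)
    (hInd : IndepFun X Z P)
    (F : ℝ → ℝ) (hF : ∀ u, F u = (P {ω | X ω ≤ u}).toReal)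
    (a b : ℝ) (ha : 0 < a) (hb : 0 < b)
    (hZ : P.map Z = volume.withDensity (fun x => ENNReal.ofReal (_root_.betaPDF a b x)))
    (δ τ : ℝ) (hδ1 : δ ≤ 1) (u : ℝ) :
    (P {ω | X ω * (1 - δ * Z ω) ^ τ > u}).toReal =
      ∫ z, (1 - F (u / (1 - δ * z) ^ τ)) * _root_.betaPDF a b z := by
  haveI : IsProbabilityMeasure (P.map X) := Measure.isProbabilityMeasure_map hXmeas.aemeasurable
  haveI : IsProbabilityMeasure (P.map Z) := Measure.isProbabilityMeasure_map hZmeas.aemeasurable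
  set S : Set (ℝ × ℝ) := {p | p.1 * (1 - δ * p.2) ^ τ > u} with hS
  have hSm : MeasurableSet S := measurableSet_lt (by fun_prop) (by fun_prop)
  have h1 : P {ω | X ω * (1 - δ * Z ω) ^ τ > u} = (P.map fun ω => (X ω, Z ω)) S := by
    rw [Measure.map_apply (hXmeas.prodMk hZmeas) hSm]; rfl
  rw [h1, hInd.map_prod_eq_prod_map_map hXmeas.aemeasurable hZmeas.aemeasurable,
    Measure.prod_apply_symm hSm, ← integral_toReal (measurable_measure_prodMk_right hSm).aemeasurable
      (Eventually.of_forall fun _ => measure_lt_top _ _), hZ,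
    integral_withDensity_eq_integral_toReal_smul (aux_meas_beta a b).ennreal_ofReal
      (Eventually.of_forall fun _ => ENNReal.ofReal_lt_top)]
  refine integral_congr_ae (Eventually.of_forall fun z => ?_)
  simp only [smul_eq_mul]
  rw [ENNReal.toReal_ofReal (aux_beta_nonneg a b z ha hb), mul_comm]
  by_cases hz : 0 < z ∧ z < 1
  · congr 1
    have hpos : 0 < 1 - δ * z := by nlinarith
    have hp : 0 < (1 - δ * z) ^ τ := Real.rpow_pos_of_pos hpos τ
    have : (fun x => (x, z)) ⁻¹' S = (Set.Iic (u / (1 - δ * z) ^ τ))ᶜ := by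
      ext x
      simp only [hS, Set.mem_preimage, Set.mem_setOf_eq, Set.mem_compl_iff, Set.mem_Iic, not_le,
        gt_iff_lt]
      rw [div_lt_iff₀ hp]
    rw [this, prob_compl_eq_one_sub measurableSet_Iic, ENNReal.toReal_sub_of_le prob_le_one (by simp),
      Measure.map_apply hXmeas measurableSet_Iic, hF]
    rfl
  · have : _root_.betaPDF a b z = 0 := by unfold _root_.betaPDF; rw [if_neg hz]
    rw [this]; simp

lemma aux_beta_scale (a b e w : ℝ) (he : 0 < e) (hw : 0 < w) (hew : e * w < 1) :
    _root_.betaPDF a b (e * w) * e ^ (1 - a) = w ^ (a - 1) * (1 - e * w) ^ (b - 1) *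
      (Real.Gamma (a + b) / (Real.Gamma a * Real.Gamma b)) := by
  unfold _root_.betaPDF
  rw [if_pos ⟨mul_pos he hw, hew⟩, Real.mul_rpow he.le hw.le]
  have : e ^ (1 - a) * e ^ (a - 1) = 1 := by
    rw [← Real.rpow_add he]; simp
  linear_combination (w ^ (a - 1) * (1 - e * w) ^ (b - 1) *
      (Real.Gamma (a + b) / (Real.Gamma a * Real.Gamma b))) * this

lemma aux_vanish (δ τ e w : ℝ) (hδ0 : 0 < δ) (hδ1 : δ ≤ 1) (hτ : 0 < τ) (he : 0 < e)
    (he2 : e ≤ 1 / 2) (hw : 2 / (τ * δ) ≤ w) (hew : e * w < 1) :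
    1 ≤ (1 - e) / (1 - δ * (e * w)) ^ τ := by
  have hc : 0 < τ * δ := mul_pos hτ hδ0
  have hw0 : 0 < w := lt_of_lt_of_le (by positivity) hw
  have hew0 : 0 < e * w := mul_pos he hw0
  have hpos : 0 < 1 - δ * (e * w) := by nlinarith
  rw [le_div_iff₀ (Real.rpow_pos_of_pos hpos τ), one_mul]
  rw [div_le_iff₀ hc] at hw
  calc (1 - δ * (e * w)) ^ τ ≤ (Real.exp (-(δ * (e * w)))) ^ τ :=
        Real.rpow_le_rpow hpos.le (by linarith [Real.add_one_le_exp (-(δ * (e * w)))]) hτ.le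
    _ = Real.exp (-(e * (w * (τ * δ)))) := by rw [← Real.exp_mul]; congr 1; ring
    _ ≤ Real.exp (-(2 * e)) := Real.exp_le_exp.2 (by nlinarith)
    _ = (Real.exp (2 * e))⁻¹ := Real.exp_neg _
    _ ≤ (1 + 2 * e)⁻¹ := inv_anti₀ (by linarith) (by linarith [Real.add_one_le_exp (2 * e)])
    _ ≤ 1 - e := by
        rw [inv_le_iff_one_le_mul₀ (by linarith)]; nlinarith

/-- Theorem 5 b), tail part: asymptotics of `P(Y > u)` for `Y = X(1 - δZ)^τ` with `F` in
the Weibull max-domain of attraction. -/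
theorem product_beta_tail_weibull
    {Ω : Type*} [MeasurableSpace Ω] (P : Measure Ω) [IsProbabilityMeasure P]
    (X Z : Ω → ℝ)
    (hXmeas : Measurable X) (hZmeas : Measurable Z)
    (hInd : IndepFun X Z P)
    -- `F` is the distribution function of `X`, with `F(0) = 0`
    (F : ℝ → ℝ) (hF : ∀ u, F u = (P {ω | X ω ≤ u}).toReal) (hF0 : F 0 = 0)
    -- `Z ~ Beta(a, b)`
    (a b : ℝ) (ha : 0 < a) (hb : 0 < b)
    (hZ : P.map Z = volume.withDensity (fun x => ENNReal.ofReal (betaPDF a b x)))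
    (δ τ : ℝ) (hδ0 : 0 < δ) (hδ1 : δ ≤ 1) (hτ : 0 < τ)
    (Y : Ω → ℝ) (hY : ∀ ω, Y ω = X ω * (1 - δ * Z ω) ^ τ)
    -- `F` has upper endpoint `1` and is in the max-domain of attraction of `Ψ_γ`
    (hxF : IsLUB {u | F u < 1} 1)
    (γ : ℝ) (hγ : 0 < γ)
    (hMDA : ∀ x : ℝ, 0 < x →
      Tendsto (fun u => (1 - F (1 - x / u)) / (1 - F (1 - 1 / u))) atTop (𝓝 (x ^ γ)))
 :
    Tendsto (fun u =>
        (P {ω | Y ω > u}).toReal /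
          ((Real.Gamma (γ + 1) * Real.Gamma (a + b) /
              (Real.Gamma b * Real.Gamma (γ + a + 1))) *
            ((1 - u) / (τ * δ)) ^ a * (1 - F u)))
      (𝓝[<] (1 : ℝ)) (𝓝 1) := by
  have hC : 0 < Real.Gamma (a + b) / (Real.Gamma a * Real.Gamma b) :=
    div_pos (Real.Gamma_pos_of_pos (add_pos ha hb))
      (mul_pos (Real.Gamma_pos_of_pos ha) (Real.Gamma_pos_of_pos hb))
  set C := Real.Gamma (a + b) / (Real.Gamma a * Real.Gamma b) with hCdef
  have hc : 0 < τ * δ := mul_pos hτ hδ0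
  -- basic facts on `F`
  have hFmono : Monotone F := by
    intro x y hxy
    rw [hF, hF]
    exact ENNReal.toReal_mono (measure_ne_top _ _) (measure_mono fun ω (h : X ω ≤ x) => h.trans hxy)
  have hFle : ∀ x, F x ≤ 1 := by
    intro x
    rw [hF]
    exact ENNReal.toReal_le_of_le_ofReal zero_le_one (by simpa using prob_le_one)
  have hFlt : ∀ x, x < 1 → F x < 1 := by
    intro x hx
    obtain ⟨y, hy, hxy, -⟩ := hxF.exists_between hx
    exact (hFmono hxy.le).trans_lt hy
  have hFgt : ∀ x, 1 < x → F x = 1 := by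
    intro x hx
    by_contra h
    exact absurd (hxF.1 (lt_of_le_of_ne (hFle x) h : F x < 1)) (not_le.2 hx)
  have hF1 : F 1 = 1 := by
    have h0 : P {ω | 1 < X ω} = 0 := by
      have : {ω | 1 < X ω} = ⋃ n : ℕ, {ω | 1 + 1 / ((n : ℝ) + 1) < X ω} := by
        ext ω
        simp only [Set.mem_setOf_eq, Set.mem_iUnion]
        constructor
        · intro h
          obtain ⟨n, hn⟩ := exists_nat_one_div_lt (sub_pos.2 h)
          exact ⟨n, by linarith⟩
        · rintro ⟨n, hn⟩
          have : 0 < 1 / ((n : ℝ) + 1) := by positivity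
          linarith
      rw [this, measure_iUnion_null_iff]
      intro n
      have hn : 0 < 1 / ((n : ℝ) + 1) := by positivity
      have h1 := hFgt (1 + 1 / ((n : ℝ) + 1)) (by linarith)
      rw [hF] at h1
      have h2 : P {ω | X ω ≤ 1 + 1 / ((n : ℝ) + 1)} = 1 := by
        rw [← ENNReal.toReal_eq_one_iff]; exact h1
      have h3 := (prob_compl_eq_zero_iff (μ := P)
        (measurableSet_le hXmeas measurable_const)).2 h2
      convert h3 using 2
      ext ω; simp
    have h1 : P {ω | X ω ≤ 1} = 1 := by
      rw [← prob_compl_eq_zero_iff (measurableSet_le hXmeas measurable_const)]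
      convert h0 using 2
      ext ω; simp
    rw [hF, h1]; simp
  have hFge : ∀ x, 1 ≤ x → F x = 1 := fun x hx =>
    le_antisymm (hFle x) (hF1 ▸ hFmono hx)
  -- the function `G`
  set G : ℝ → ℝ := fun t => 1 - F (1 - t) with hG
  have hGmono : Monotone G := by
    intro x y hxy
    have := hFmono (show 1 - y ≤ 1 - x by linarith)
    simp only [hG]; linarith
  have hG0 : ∀ x, 0 ≤ G x := fun x => sub_nonneg.2 (hFle _)
  have hGp : ∀ x, 0 < x → 0 < G x := fun x hx => sub_pos.2 (hFlt _ (by linarith))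
  have hGlim : ∀ x : ℝ, 0 < x →
      Tendsto (fun e => G (x * e) / G e) (𝓝[>] 0) (𝓝 (x ^ γ)) := by
    intro x hx
    refine ((hMDA x hx).comp tendsto_inv_nhdsGT_zero).congr fun e => ?_
    simp [hG]
  -- the integrand
  set I : ℝ → ℝ → ℝ := fun e w =>
    G ((1 - (1 - e) / (1 - δ * (e * w)) ^ τ) / e * e) / G e *
      (_root_.betaPDF a b (e * w) * e ^ (1 - a)) with hI
  have hGmeas : Measurable G := hGmono.measurable
  have hlimI : Tendsto (fun e => ∫ w, I e w) (𝓝[>] 0)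
      (𝓝 (∫ w, C * (if 0 < w then w ^ (a - 1) * (max (1 - τ * δ * w) 0) ^ γ else 0))) := by
    have hepos : ∀ᶠ e in 𝓝[>] (0 : ℝ), 0 < e := eventually_mem_nhdsWithin
    set M := 2 / (τ * δ) with hM
    have hMpos : 0 < M := by positivity
    set K : ℝ := 1 + (1 / 2) ^ (b - 1) with hK
    refine tendsto_integral_filter_of_dominated_convergence
      ((Set.Ioc 0 M).indicator fun w => w ^ (a - 1) * K * C) ?_ ?_ ?_ ?_
    · refine Eventually.of_forall fun e => Measurable.aestronglyMeasurable ?_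
      have := aux_meas_beta a b
      simp only [hI]
      fun_prop
    · have e1 : ∀ᶠ e in 𝓝[>] (0 : ℝ), e < 1 / 2 :=
        (gt_mem_nhds (by norm_num)).filter_mono nhdsWithin_le_nhds
      have e2 : ∀ᶠ e in 𝓝[>] (0 : ℝ), e < 1 / 2 / M :=
        (gt_mem_nhds (by positivity)).filter_mono nhdsWithin_le_nhds
      filter_upwards [hepos, e1, e2] with e he he1 he2
      rw [lt_div_iff₀ hMpos] at he2
      refine Eventually.of_forall fun w => ?_
      have hInn : 0 ≤ I e w := by
        simp only [hI]
        exact mul_nonneg (div_nonneg (hG0 _) (hG0 _))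
          (mul_nonneg (aux_beta_nonneg a b _ ha hb) (Real.rpow_nonneg he.le _))
      rw [Real.norm_of_nonneg hInn]
      have hKpos : 0 < K := by positivity
      have hbnn : 0 ≤ (Set.Ioc 0 M).indicator (fun w => w ^ (a - 1) * K * C) w := by
        refine Set.indicator_nonneg (fun x hx => ?_) w
        have := Real.rpow_nonneg hx.1.le (a - 1)
        positivity
      by_cases hew : 0 < e * w ∧ e * w < 1
      · have hw : 0 < w := (mul_pos_iff_of_pos_left he).1 hew.1
        by_cases hwM : w ≤ M
        · rw [Set.indicator_of_mem (show w ∈ Set.Ioc 0 M from ⟨hw, hwM⟩)]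
          simp only [hI]
          rw [aux_beta_scale a b e w he hw hew.2]
          have hpos : 0 < 1 - δ * (e * w) := by nlinarith [hew.1, hew.2]
          have hle1 : (1 - δ * (e * w)) ^ τ ≤ 1 :=
            Real.rpow_le_one hpos.le (by nlinarith [hew.1]) hτ.le
          have hr : G ((1 - (1 - e) / (1 - δ * (e * w)) ^ τ) / e * e) / G e ≤ 1 := by
            rw [div_le_one (hGp e he), div_mul_cancel₀ _ he.ne']
            apply hGmono
            have : 1 - e ≤ (1 - e) / (1 - δ * (e * w)) ^ τ := by
              rw [le_div_iff₀ (Real.rpow_pos_of_pos hpos τ)]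
              nlinarith
            linarith
          have hy : 1 / 2 ≤ 1 - e * w := by nlinarith
          have hk : (1 - e * w) ^ (b - 1) ≤ K := by
            rcases le_total 0 (b - 1) with h | h
            · have := Real.rpow_le_one (x := 1 - e * w) (by linarith) (by linarith [hew.1]) h
              have h2 : (0 : ℝ) ≤ (1 / 2) ^ (b - 1) := by positivity
              linarith
            · have := Real.rpow_le_rpow_of_nonpos (by norm_num : (0 : ℝ) < 1 / 2) hy h
              linarith
          have hwa := Real.rpow_nonneg hw.le (a - 1)
          have hya := Real.rpow_nonneg (show 0 ≤ 1 - e * w by linarith) (b - 1)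
          calc _ ≤ 1 * (w ^ (a - 1) * (1 - e * w) ^ (b - 1) * C) :=
                mul_le_mul_of_nonneg_right hr (by positivity)
            _ ≤ w ^ (a - 1) * K * C := by rw [one_mul]; gcongr
        · have hv := aux_vanish δ τ e w hδ0 hδ1 hτ he he1.le (not_le.1 hwM).le hew.2
          have : I e w = 0 := by
            simp only [hI]
            rw [div_mul_cancel₀ _ he.ne']
            have : G (1 - (1 - e) / (1 - δ * (e * w)) ^ τ) = 0 := by
              simp only [hG]
              rw [sub_sub_cancel, hFge _ hv, sub_self]
            rw [this]; simp
          rw [this]; exact hbnn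
      · have : I e w = 0 := by
          simp only [hI, _root_.betaPDF]
          rw [if_neg hew]; simp
        rw [this]; exact hbnn
    · rw [integrable_indicator_iff measurableSet_Ioc]
      have h1 : IntervalIntegrable (fun w : ℝ => w ^ (a - 1)) volume 0 M :=
        intervalIntegral.intervalIntegrable_rpow' (by linarith)
      rw [intervalIntegrable_iff_integrableOn_Ioc_of_le hMpos.le] at h1
      exact (h1.mul_const K).mul_const C
    · refine Eventually.of_forall fun w => ?_
      by_cases hw : 0 < w
      · rw [if_pos hw]
        have h1 := aux_ratio G hGmono hG0 hGp γ hγ hGlim _ _ (aux_slope δ τ w)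
        have h0 : Tendsto (fun e : ℝ => 1 - e * w) (𝓝[>] 0) (𝓝 1) := by
          have : Continuous (fun e : ℝ => 1 - e * w) := by fun_prop
          simpa using (this.tendsto 0).mono_left nhdsWithin_le_nhds
        have h2 : Tendsto (fun e : ℝ => w ^ (a - 1) * (1 - e * w) ^ (b - 1) * C) (𝓝[>] 0)
            (𝓝 (w ^ (a - 1) * 1 * C)) := by
          refine (Tendsto.const_mul _ ?_).mul_const _
          simpa using h0.rpow_const (p := b - 1) (Or.inl one_ne_zero)
        have h3 := h1.mul h2
        refine (h3.congr' ?_).trans_eq ?_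
        · filter_upwards [hepos, h0.eventually (lt_mem_nhds zero_lt_one)] with e he he1
          simp only [hI]
          rw [aux_beta_scale a b e w he hw (by linarith)]
        · congr 1; ring
      · rw [if_neg hw, mul_zero]
        refine tendsto_const_nhds.congr' ?_
        filter_upwards [hepos] with e he
        simp only [hI, _root_.betaPDF]
        rw [if_neg (fun h => hw ((mul_pos_iff_of_pos_left he).1 h.1))]; simp
  rw [integral_const_mul, aux_beta_int a γ (τ * δ) ha hγ hc] at hlimI
  -- change of variables `u = 1 - e`
  have hsub : Tendsto (fun u : ℝ => 1 - u) (𝓝[<] 1) (𝓝[>] 0) := by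
    refine tendsto_nhdsWithin_iff.2 ⟨?_, ?_⟩
    · have : Continuous (fun u : ℝ => 1 - u) := by fun_prop
      simpa using (this.tendsto 1).mono_left nhdsWithin_le_nhds
    · filter_upwards [self_mem_nhdsWithin] with u hu
      exact Set.mem_Ioi.2 (sub_pos.2 (Set.mem_Iio.1 hu))
  have hfin := (hlimI.comp hsub).const_mul
    (Real.Gamma b * Real.Gamma (γ + a + 1) / (Real.Gamma (γ + 1) * Real.Gamma (a + b)) *
      (τ * δ) ^ a)
  have g1 := (Real.Gamma_pos_of_pos ha).ne'
  have g2 := (Real.Gamma_pos_of_pos hb).ne'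
  have g3 := (Real.Gamma_pos_of_pos (add_pos ha hb)).ne'
  have g4 := (Real.Gamma_pos_of_pos (show 0 < γ + 1 by linarith)).ne'
  have g5 := (Real.Gamma_pos_of_pos (show 0 < γ + a + 1 by linarith)).ne'
  have g6 := (Real.rpow_pos_of_pos hc a).ne'
  refine (hfin.congr' ?_).trans_eq ?_
  · filter_upwards [self_mem_nhdsWithin] with u hu
    have he : 0 < 1 - u := sub_pos.2 hu
    have hprob : (P {ω | Y ω > u}).toReal =
        ∫ z, (1 - F (u / (1 - δ * z) ^ τ)) * _root_.betaPDF a b z := by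
      rw [← aux_prob P X Z hXmeas hZmeas hInd F hF a b ha hb hZ δ τ hδ1 u]
      simp_rw [hY]
    have hGu : G (1 - u) = 1 - F u := by simp [hG]
    have hGu0 : 0 < 1 - F u := hGu ▸ hGp _ he
    have hint : ∫ w, I (1 - u) w = (P {ω | Y ω > u}).toReal / (1 - F u) / (1 - u) ^ a := by
      have hII : ∀ w, I (1 - u) w = ((1 - u) ^ (1 - a) / (1 - F u)) *
          (fun z => (1 - F (u / (1 - δ * z) ^ τ)) * _root_.betaPDF a b z) ((1 - u) * w) := by
        intro w
        simp only [hI]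
        rw [div_mul_cancel₀ _ he.ne', hGu]
        simp only [hG, sub_sub_cancel]
        ring
      rw [integral_congr_ae (Eventually.of_forall hII), integral_const_mul,
        Measure.integral_comp_mul_left
          (fun z => (1 - F (u / (1 - δ * z) ^ τ)) * _root_.betaPDF a b z), ← hprob, Real.rpow_sub he,
        Real.rpow_one, abs_of_pos (by positivity), smul_eq_mul]
      field_simp
    simp only [Function.comp_apply]
    rw [hint, Real.div_rpow he.le hc.le]
    have := (Real.rpow_pos_of_pos he a).ne'
    field_simp
  · congr 1
    rw [hCdef]
    field_simp
end
end

section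
/- Let X = A R U be an elliptical random vector in ℝ^d, d ≥ 2, with m < d the multiplicity of the largest eigenvalue λ_(m) of Σ = AAᵀ, and let W ~ Beta(m/2, (d−m)/2) be independent of R. Then for every u > 0: P(λ_(m) R² > u) = 1 − F(√(u/λ_(m))) ≥ P(‖X‖² ≥ u) ≥ P(λ_(m) R² W > u). -/
open MeasureTheory Filter Topology Matrix ProbabilityTheory

noncomputable section

lemma moments_ext (μ ν : Measure ℝ) [IsProbabilityMeasure μ] [IsProbabilityMeasure ν]
    (hμ : ∀ᵐ x ∂μ, x ∈ Set.Icc (0:ℝ) 1) (hν : ∀ᵐ x ∂ν, x ∈ Set.Icc (0:ℝ) 1)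
    (h : ∀ k : ℕ, ∫ x, x ^ k ∂μ = ∫ x, x ^ k ∂ν) : μ = ν := by
  have hi : ∀ (ρ : Measure ℝ) [IsProbabilityMeasure ρ], (∀ᵐ x ∂ρ, x ∈ Set.Icc (0:ℝ) 1) →
      ∀ k : ℕ, Integrable (fun x : ℝ => x ^ k) ρ := by
    intro ρ _ hρ k
    refine Integrable.of_bound (by fun_prop) 1 ?_
    filter_upwards [hρ] with x hx
    rw [Real.norm_eq_abs, abs_pow, abs_of_nonneg hx.1]
    exact pow_le_one₀ hx.1 hx.2
  have hip : ∀ (ρ : Measure ℝ) [IsProbabilityMeasure ρ], (∀ᵐ x ∂ρ, x ∈ Set.Icc (0:ℝ) 1) →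
      ∀ p : Polynomial ℝ, Integrable (fun x : ℝ => p.eval x) ρ := by
    intro ρ _ hρ p
    simp_rw [Polynomial.eval_eq_sum_range]
    exact integrable_finsetSum _ fun i _ => (hi ρ hρ i).const_mul _
  have hp : ∀ p : Polynomial ℝ, ∫ x, p.eval x ∂μ = ∫ x, p.eval x ∂ν := by
    intro p
    simp_rw [Polynomial.eval_eq_sum_range]
    rw [integral_finsetSum _ fun i _ => (hi μ hμ i).const_mul _,
      integral_finsetSum _ fun i _ => (hi ν hν i).const_mul _]
    simp_rw [integral_const_mul, h]
  refine ext_of_forall_integral_eq_of_IsFiniteMeasure fun f => ?_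
  have key : ∀ (ρ : Measure ℝ) [IsProbabilityMeasure ρ], (∀ᵐ x ∂ρ, x ∈ Set.Icc (0:ℝ) 1) →
      ∀ ε > 0, ∀ p : Polynomial ℝ, (∀ x ∈ Set.Icc (0:ℝ) 1, |p.eval x - f x| < ε) →
      |∫ x, p.eval x ∂ρ - ∫ x, f x ∂ρ| ≤ ε := by
    intro ρ _ hρ ε hε p hpf
    rw [← integral_sub (hip ρ hρ p) (f.integrable ρ)]
    have := norm_integral_le_of_norm_le_const (μ := ρ) (C := ε)
      (f := fun x => p.eval x - f x) (by
        filter_upwards [hρ] with x hx using (hpf x hx).le)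
    simpa using this
  by_contra hne
  have hpos : 0 < |∫ x, f x ∂μ - ∫ x, f x ∂ν| := abs_pos.2 (sub_ne_zero.2 hne)
  set δ := |∫ x, f x ∂μ - ∫ x, f x ∂ν| with hδ
  obtain ⟨p, hpf⟩ := exists_polynomial_near_of_continuousOn 0 1 f f.continuous.continuousOn
    (δ / 3) (by positivity)
  have h1 := key μ hμ (δ/3) (by positivity) p hpf
  have h2 := key ν hν (δ/3) (by positivity) p hpf
  rw [hp p] at h1
  have h3 := abs_sub_le (∫ x, f x ∂μ) (∫ x, p.eval x ∂ν) (∫ x, f x ∂ν)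
  rw [abs_sub_comm] at h1
  linarith

lemma radial_int (ι : Type) [Fintype ι] [Nonempty ι] (k : ℕ) :
    (∫ x : EuclideanSpace ℝ ι, ‖x‖ ^ (2 * k) * Real.exp (-‖x‖ ^ 2)) *
      Real.Gamma ((Fintype.card ι : ℝ) / 2) =
    (∫ x : EuclideanSpace ℝ ι, Real.exp (-‖x‖ ^ 2)) *
      Real.Gamma ((Fintype.card ι : ℝ) / 2 + k) := by
  have hn : 0 < Fintype.card ι := Fintype.card_pos
  have hr : ∀ j : ℕ, ∫ y in Set.Ioi (0:ℝ), y ^ (Fintype.card ι - 1) *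
      (y ^ (2 * j) * Real.exp (-y ^ 2)) = (1/2) * Real.Gamma ((Fintype.card ι : ℝ) / 2 + j) := by
    intro j
    have := integral_rpow_mul_exp_neg_rpow (p := 2) (q := (Fintype.card ι - 1 + 2 * j : ℕ))
      (by norm_num) (by have : (0:ℝ) ≤ (Fintype.card ι - 1 + 2 * j : ℕ) := by positivity
                        linarith)
    convert this using 2
    · ext y
      rw [Real.rpow_natCast, Real.rpow_two, pow_add, mul_assoc]
    · congr 1
      push_cast [Nat.cast_sub hn]
      ring
  have h1 := integral_fun_norm_addHaar (volume : Measure (EuclideanSpace ℝ ι))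
    (fun y => y ^ (2 * k) * Real.exp (-y ^ 2))
  have h0 := integral_fun_norm_addHaar (volume : Measure (EuclideanSpace ℝ ι))
    (fun y => y ^ (2 * 0) * Real.exp (-y ^ 2))
  simp only [finrank_euclideanSpace, smul_eq_mul, nsmul_eq_mul] at h1 h0
  rw [hr] at h1 h0
  simp only [mul_zero, pow_zero, one_mul, Nat.cast_zero, add_zero] at h0
  rw [h1, h0]
  ring

lemma one_dim (k : ℕ) : ∫ x : ℝ, x ^ (2 * k) * Real.exp (-x ^ 2) = Real.Gamma (k + 1 / 2) := by
  have := integral_comp_abs (f := fun x : ℝ => x ^ (2 * k) * Real.exp (-x ^ 2))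
  simp only [pow_mul, sq_abs] at this ⊢
  rw [this]
  have h := integral_rpow_mul_exp_neg_rpow (p := 2) (q := (2 * k : ℕ))
      (by norm_num) (by have : (0:ℝ) ≤ (2 * k : ℕ) := by positivity
                        linarith)
  simp only [Real.rpow_natCast, Real.rpow_two, pow_mul] at h
  rw [h]
  push_cast
  rw [show ((2:ℝ) * k + 1) / 2 = k + 1/2 by ring]
  ring

lemma coord_int (ι : Type) [Fintype ι] [DecidableEq ι] (i₀ : ι) (k : ℕ) :
    (∫ x : EuclideanSpace ℝ ι, (x i₀) ^ (2 * k) * Real.exp (-‖x‖ ^ 2)) * √Real.pi =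
    (∫ x : EuclideanSpace ℝ ι, Real.exp (-‖x‖ ^ 2)) * Real.Gamma (k + 1 / 2) := by
  have key : ∀ j : ℕ, ∫ x : EuclideanSpace ℝ ι, (x i₀) ^ (2 * j) * Real.exp (-‖x‖ ^ 2) =
      Real.Gamma (j + 1/2) * ∏ i ∈ Finset.univ.erase i₀, √Real.pi := by
    intro j
    have h := (PiLp.volume_preserving_ofLp ι).integral_comp
      (MeasurableEquiv.toLp 2 (ι → ℝ)).symm.measurableEmbedding
      (fun y : ι → ℝ => ∏ i, ((if i = i₀ then (y i) ^ (2 * j) else 1) * Real.exp (-(y i)^2)))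
    have h2 := integral_fintype_prod_volume_eq_prod (ι := ι) (E := fun _ => ℝ) (𝕜 := ℝ)
      (fun i t => (if i = i₀ then t ^ (2 * j) else 1) * Real.exp (-t^2))
    rw [h2, ← Finset.mul_prod_erase _ _ (Finset.mem_univ i₀)] at h
    simp only [if_true] at h
    rw [one_dim] at h
    rw [Finset.prod_congr rfl (g := fun _ => √Real.pi)] at h
    · rw [← h]
      congr 1
      ext x
      rw [Finset.prod_mul_distrib, ← Real.exp_sum, EuclideanSpace.real_norm_sq_eq]
      simp
    · intro i hi
      simp only [Finset.ne_of_mem_erase hi, if_false, one_mul]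
      have h3 := one_dim 0
      simp only [mul_zero, pow_zero, one_mul, Nat.cast_zero, zero_add, Real.Gamma_one_half_eq] at h3
      exact h3
  have h0 := key 0
  simp only [mul_zero, pow_zero, one_mul, Nat.cast_zero, zero_add, Real.Gamma_one_half_eq] at h0
  rw [key k, h0]
  ring

lemma exists_onb (ι : Type) [Fintype ι] [DecidableEq ι] (i₀ : ι) (v : EuclideanSpace ℝ ι)
    (hv : ‖v‖ = 1) : ∃ b : OrthonormalBasis ι ℝ (EuclideanSpace ℝ ι), b i₀ = v := by
  obtain ⟨b, hb⟩ := Orthonormal.exists_orthonormalBasis_extension_of_card_eq (𝕜 := ℝ)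
    (E := EuclideanSpace ℝ ι) (ι := ι) (by simp) (v := fun _ => v) (s := {i₀}) (by
      rw [orthonormal_iff_ite]
      rintro ⟨i, hi⟩ ⟨j, hj⟩
      simp only [Set.mem_singleton_iff] at hi hj
      subst hi
      subst hj
      simp [hv])
  exact ⟨b, hb i₀ rfl⟩

lemma inner_int (ι : Type) [Fintype ι] [DecidableEq ι] (i₀ : ι) (k : ℕ)
    (u : EuclideanSpace ℝ ι) :
    (∫ x : EuclideanSpace ℝ ι, (inner ℝ u x) ^ (2 * k) * Real.exp (-‖x‖ ^ 2)) =
    ‖u‖ ^ (2 * k) * ∫ x : EuclideanSpace ℝ ι, (x i₀) ^ (2 * k) * Real.exp (-‖x‖ ^ 2) := by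
  have hunit : ∃ v : EuclideanSpace ℝ ι, ‖v‖ = 1 ∧ u = ‖u‖ • v := by
    by_cases hu : u = 0
    · refine ⟨EuclideanSpace.single i₀ 1, by simp, by simp [hu]⟩
    · have : ‖u‖ ≠ 0 := norm_ne_zero_iff.2 hu
      exact ⟨‖u‖⁻¹ • u, by rw [norm_smul]; simp [this], by rw [smul_smul]; simp [this]⟩
  obtain ⟨v, hv, huv⟩ := hunit
  obtain ⟨b, hb⟩ := exists_onb ι i₀ v hv
  have h := b.measurePreserving_repr.integral_comp
    b.repr.toHomeomorph.measurableEmbedding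
    (fun y : EuclideanSpace ℝ ι => (y i₀) ^ (2 * k) * Real.exp (-‖y‖ ^ 2))
  rw [← h, ← integral_const_mul]
  congr 1
  ext x
  rw [b.repr_apply_apply, hb, b.repr.norm_map]
  conv_lhs => rw [huv, inner_smul_left]
  simp only [conj_trivial]
  ring

lemma unif_coord {Ω : Type*} [MeasurableSpace Ω] (P : Measure Ω) (d : ℕ)
    (U : Ω → Fin d → ℝ) (hU : IsUniformOnSphere P U) (i₀ : Fin d) (k : ℕ)
    (w : EuclideanSpace ℝ (Fin d)) :
    ∫ ω, (∑ i, w i * U ω i) ^ (2 * k) ∂P = ‖w‖ ^ (2 * k) * ∫ ω, (U ω i₀) ^ (2 * k) ∂P := by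
  have hunit : ∃ v : EuclideanSpace ℝ (Fin d), ‖v‖ = 1 ∧ w = ‖w‖ • v := by
    by_cases hu : w = 0
    · refine ⟨EuclideanSpace.single i₀ 1, by simp, by simp [hu]⟩
    · have : ‖w‖ ≠ 0 := norm_ne_zero_iff.2 hu
      exact ⟨‖w‖⁻¹ • w, by rw [norm_smul]; simp [this], by rw [smul_smul]; simp [this]⟩
  obtain ⟨v, hv, huv⟩ := hunit
  obtain ⟨b, hb⟩ := exists_onb (Fin d) i₀ v hv
  let D : Matrix (Fin d) (Fin d) ℝ := Matrix.of fun i j => b i j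
  have hD : D * Dᵀ = 1 := by
    ext i j
    have := (orthonormal_iff_ite.1 b.orthonormal) i j
    rw [PiLp.inner_apply] at this
    simp only [Matrix.mul_apply, Matrix.transpose_apply, D, Matrix.of_apply, Matrix.one_apply]
    rw [← this]
    refine Finset.sum_congr rfl fun l _ => ?_
    simp [mul_comm]
  obtain ⟨hm, -, hinv⟩ := hU
  have h := hinv D hD
  have hDm : Measurable (fun ω => D.mulVec (U ω)) := by
    have : Measurable (fun x : Fin d → ℝ => D.mulVec x) := by
      exact (Continuous.matrix_mulVec continuous_const continuous_id).measurable
    exact this.comp hm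
  have hf : Measurable (fun x : Fin d → ℝ => x i₀ ^ (2 * k)) := by fun_prop
  have e1 := integral_map (μ := P) hm.aemeasurable (f := fun x : Fin d → ℝ => x i₀ ^ (2 * k))
    hf.aestronglyMeasurable
  have e2 := integral_map (μ := P) hDm.aemeasurable (f := fun x : Fin d → ℝ => x i₀ ^ (2 * k))
    hf.aestronglyMeasurable
  rw [h, e1] at e2
  rw [e2, ← integral_const_mul]
  congr 1
  ext ω
  rw [← mul_pow]
  congr 1
  simp only [Matrix.mulVec, dotProduct, D, Matrix.of_apply, hb]
  rw [Finset.mul_sum]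
  refine Finset.sum_congr rfl fun i _ => ?_
  conv_lhs => rw [huv]
  simp [mul_assoc]

lemma unif_moment_aux {Ω : Type*} [MeasurableSpace Ω] (P : Measure Ω) [IsProbabilityMeasure P]
    (d : ℕ) (U : Ω → Fin d → ℝ) (hU : IsUniformOnSphere P U) (i₀ : Fin d) (k : ℕ)
    (ι : Type) [Fintype ι] [DecidableEq ι] [Nonempty ι] (e : ι → Fin d)
    (he : Function.Injective e) :
    (∫ ω, (∑ i, U ω (e i) ^ 2) ^ k ∂P) * Real.Gamma (k + 1 / 2) *
        Real.Gamma ((Fintype.card ι : ℝ) / 2) =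
      (∫ ω, (U ω i₀) ^ (2 * k) ∂P) * √Real.pi * Real.Gamma ((Fintype.card ι : ℝ) / 2 + k) := by
  have hUm := hU.1
  set K := ∫ x : EuclideanSpace ℝ ι, Real.exp (-‖x‖ ^ 2) with hK
  have hn : (0:ℝ) < Fintype.card ι := by exact_mod_cast Fintype.card_pos
  have hG : 0 < Real.Gamma ((Fintype.card ι : ℝ) / 2) := Real.Gamma_pos_of_pos (by positivity)
  have hGk : 0 < Real.Gamma ((Fintype.card ι : ℝ) / 2 + k) := Real.Gamma_pos_of_pos (by positivity)
  have hKpos : 0 < K := by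
    have h := coord_int ι (Classical.arbitrary ι) 0
    have hc : Integrable (fun x : EuclideanSpace ℝ ι => Real.exp (-‖x‖ ^ 2)) := by
      have := GaussianFourier.integrable_cexp_neg_mul_sq_norm_add (V := EuclideanSpace ℝ ι)
        (b := 1) (by simp) 0 0
      have h2 := this.re
      refine h2.congr (Filter.Eventually.of_forall fun x => ?_)
      simp only [RCLike.re_to_complex]
      rw [← Complex.ofReal_re (Real.exp (-‖x‖ ^ 2))]
      congr 1
      push_cast
      congr 1
      simp
    exact integral_exp_pos hc
  have hI := radial_int ι k
  rw [← hK] at hI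
  have hint : Integrable (fun x : EuclideanSpace ℝ ι => ‖x‖ ^ (2 * k) * Real.exp (-‖x‖ ^ 2)) := by
    apply Integrable.of_integral_ne_zero
    intro h0
    rw [h0, zero_mul] at hI
    have := mul_pos hKpos hGk
    linarith
  let V : Ω → EuclideanSpace ℝ ι := fun ω => WithLp.toLp 2 (fun i => U ω (e i))
  have hVm : Measurable V := by
    apply (PiLp.continuous_toLp 2 (fun _ : ι => ℝ)).measurable.comp
    fun_prop
  have hVsq : ∀ ω, ‖V ω‖ ^ 2 = ∑ i, U ω (e i) ^ 2 := by
    intro ω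
    rw [EuclideanSpace.real_norm_sq_eq]
  have hV1 : ∀ ω, ‖V ω‖ ≤ 1 := by
    intro ω
    have h1 := hU.2.1 ω
    rw [eNorm, Real.sqrt_eq_one] at h1
    have : ‖V ω‖ ^ 2 ≤ 1 := by
      rw [hVsq, ← h1, ← Finset.sum_image (f := fun j => U ω j ^ 2) (g := e) (s := Finset.univ)
        (fun a _ b _ h => he h)]
      exact Finset.sum_le_sum_of_subset_of_nonneg (Finset.subset_univ _)
        fun _ _ _ => sq_nonneg _
    nlinarith [norm_nonneg (V ω)]
  -- Fubini
  have hF : Integrable (Function.uncurry fun (x : EuclideanSpace ℝ ι) (ω : Ω) =>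
      (inner ℝ (V ω) x) ^ (2 * k) * Real.exp (-‖x‖ ^ 2)) (volume.prod P) := by
    refine (hint.comp_fst P).mono' ?_ ?_
    · apply Measurable.aestronglyMeasurable
      have : Measurable fun z : EuclideanSpace ℝ ι × Ω => inner ℝ (V z.2) z.1 :=
        (hVm.comp measurable_snd).inner measurable_fst
      have h2 : Measurable fun z : EuclideanSpace ℝ ι × Ω => Real.exp (-‖z.1‖ ^ 2) := by fun_prop
      exact (this.pow_const _).mul h2
    · refine Filter.Eventually.of_forall fun z => ?_
      simp only [Function.uncurry]
      rw [norm_mul, norm_pow, Real.norm_eq_abs (Real.exp _), abs_of_pos (Real.exp_pos _)]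
      gcongr
      calc ‖inner ℝ (V z.2) z.1‖ ≤ ‖V z.2‖ * ‖z.1‖ := norm_inner_le_norm _ _
        _ ≤ 1 * ‖z.1‖ := by gcongr; exact hV1 _
        _ = ‖z.1‖ := one_mul _
  have hswap := integral_integral_swap hF
  have hR : (∫ ω, (∫ x : EuclideanSpace ℝ ι, (inner ℝ (V ω) x) ^ (2 * k) *
      Real.exp (-‖x‖ ^ 2)) ∂P) =
      (∫ ω, (∑ i, U ω (e i) ^ 2) ^ k ∂P) *
      ∫ x : EuclideanSpace ℝ ι, (x (Classical.arbitrary ι)) ^ (2 * k) * Real.exp (-‖x‖ ^ 2) := by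
    rw [← integral_mul_const]
    congr 1
    ext ω
    rw [inner_int ι (Classical.arbitrary ι), pow_mul, hVsq]
  have hL : ∫ x : EuclideanSpace ℝ ι, ∫ ω, (inner ℝ (V ω) x) ^ (2 * k) * Real.exp (-‖x‖ ^ 2) ∂P =
      (∫ ω, (U ω i₀) ^ (2 * k) ∂P) *
        ∫ x : EuclideanSpace ℝ ι, ‖x‖ ^ (2 * k) * Real.exp (-‖x‖ ^ 2) := by
    rw [← integral_const_mul]
    congr 1
    ext x
    rw [integral_mul_const]
    let w : EuclideanSpace ℝ (Fin d) :=
      WithLp.toLp 2 (fun j => ∑ i, if e i = j then x i else 0)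
    have hwe : ∀ i, w (e i) = x i := by
      intro i
      simp only [w]
      simp [he.eq_iff]
    have hw0 : ∀ j, j ∉ Finset.univ.image e → w j = 0 := by
      intro j hj
      simp only [w]
      refine Finset.sum_eq_zero fun i _ => if_neg fun h => hj ?_
      exact Finset.mem_image.2 ⟨i, Finset.mem_univ _, h⟩
    have hsum : ∀ g : Fin d → ℝ, (∀ j, j ∉ Finset.univ.image e → g j = 0) →
        ∑ j, g j = ∑ i, g (e i) := by
      intro g hg
      rw [← Finset.sum_image (f := g) (g := e) (s := Finset.univ) (fun a _ b _ h => he h)]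
      exact (Finset.sum_subset (Finset.subset_univ _) fun j _ hj => hg j hj).symm
    have hwn : ‖w‖ = ‖x‖ := by
      have : ‖w‖ ^ 2 = ‖x‖ ^ 2 := by
        rw [EuclideanSpace.real_norm_sq_eq, EuclideanSpace.real_norm_sq_eq,
          hsum _ (fun j hj => by rw [hw0 j hj]; simp)]
        simp_rw [hwe]
      exact (sq_eq_sq₀ (norm_nonneg _) (norm_nonneg _)).1 this
    have hc := unif_coord P d U hU i₀ k w
    rw [hwn] at hc
    have hin : ∀ ω, inner ℝ (V ω) x = ∑ j, w j * U ω j := by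
      intro ω
      rw [hsum _ (fun j hj => by rw [hw0 j hj]; simp), PiLp.inner_apply]
      simp_rw [hwe]
      rfl
    simp_rw [hin]
    rw [hc]
    ring
  rw [hL, hR] at hswap
  have hJ := coord_int ι (Classical.arbitrary ι) k
  rw [← hK] at hJ
  have hpi : 0 < √Real.pi := Real.sqrt_pos.2 Real.pi_pos
  set b := ∫ ω, (∑ i, U ω (e i) ^ 2) ^ k ∂P
  set c := ∫ ω, (U ω i₀) ^ (2 * k) ∂P
  set I := ∫ x : EuclideanSpace ℝ ι, ‖x‖ ^ (2 * k) * Real.exp (-‖x‖ ^ 2)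
  set J := ∫ x : EuclideanSpace ℝ ι,
    (x (Classical.arbitrary ι)) ^ (2 * k) * Real.exp (-‖x‖ ^ 2)
  apply mul_left_cancel₀ hKpos.ne'
  calc K * (b * Real.Gamma (k + 1 / 2) * Real.Gamma ((Fintype.card ι : ℝ) / 2))
      = b * (K * Real.Gamma (k + 1 / 2)) * Real.Gamma ((Fintype.card ι : ℝ) / 2) := by ring
    _ = (b * J) * √Real.pi * Real.Gamma ((Fintype.card ι : ℝ) / 2) := by rw [← hJ]; ring
    _ = c * √Real.pi * (I * Real.Gamma ((Fintype.card ι : ℝ) / 2)) := by rw [← hswap]; ring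
    _ = _ := by rw [hI]; ring

lemma betaPDF_eq_real (a b x : ℝ) : _root_.betaPDF a b x = betaPDFReal a b x := by
  unfold _root_.betaPDF betaPDFReal ProbabilityTheory.beta
  split_ifs
  · rw [one_div_div]; ring
  · rfl

lemma betaPDFReal_nonneg' {a b : ℝ} (ha : 0 < a) (hb : 0 < b) (x : ℝ) :
    0 ≤ betaPDFReal a b x := by
  by_cases h : 0 < x ∧ x < 1
  · exact (betaPDFReal_pos h.1 h.2 ha hb).le
  · simp [betaPDFReal, h]

lemma integral_betaPDFReal {a b : ℝ} (ha : 0 < a) (hb : 0 < b) :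
    ∫ x, betaPDFReal a b x = 1 := by
  rw [integral_eq_lintegral_of_nonneg_ae
    (Filter.Eventually.of_forall (betaPDFReal_nonneg' ha hb)) (by fun_prop)]
  have := lintegral_betaPDF_eq_one ha hb
  unfold ProbabilityTheory.betaPDF at this
  rw [this]; simp

lemma beta_moment {a b : ℝ} (ha : 0 < a) (hb : 0 < b) (k : ℕ) :
    ∫ x, x ^ k ∂(volume.withDensity (fun x => ENNReal.ofReal (_root_.betaPDF a b x))) =
      Real.Gamma (a + k) * Real.Gamma (a + b) / (Real.Gamma a * Real.Gamma (a + b + k)) := by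
  simp_rw [betaPDF_eq_real]
  rw [integral_withDensity_eq_integral_toReal_smul (by fun_prop) (by simp)]
  have hak : 0 < a + k := by positivity
  have h : ∀ x, (ENNReal.ofReal (betaPDFReal a b x)).toReal • x ^ k =
      (ProbabilityTheory.beta (a + k) b / ProbabilityTheory.beta a b) *
        betaPDFReal (a + k) b x := by
    intro x
    rw [ENNReal.toReal_ofReal (betaPDFReal_nonneg' ha hb x), smul_eq_mul]
    unfold betaPDFReal
    split_ifs with hx
    · have h1 := (beta_pos hak hb).ne'
      have h2 := (beta_pos ha hb).ne'
      rw [show a + (k:ℝ) - 1 = (a - 1) + k by ring, Real.rpow_add_natCast hx.1.ne']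
      field_simp
    · simp
  simp_rw [h]
  rw [integral_const_mul, integral_betaPDFReal hak hb]
  unfold ProbabilityTheory.beta
  have g1 := (Real.Gamma_pos_of_pos ha).ne'
  have g2 := (Real.Gamma_pos_of_pos hb).ne'
  have g3 := (Real.Gamma_pos_of_pos hak).ne'
  have g4 := (Real.Gamma_pos_of_pos (add_pos ha hb)).ne'
  have g5 := (Real.Gamma_pos_of_pos (add_pos hak hb)).ne'
  rw [show a + b + (k:ℝ) = a + k + b by ring]
  field_simp

lemma beta_supp (a b : ℝ) :
    ∀ᵐ x ∂(volume.withDensity (fun x => ENNReal.ofReal (_root_.betaPDF a b x))),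
      x ∈ Set.Icc (0:ℝ) 1 := by
  simp_rw [betaPDF_eq_real]
  rw [ae_withDensity_iff (by fun_prop)]
  refine Filter.Eventually.of_forall fun x hx => ?_
  by_contra hn
  apply hx
  have : ¬ (0 < x ∧ x < 1) := fun h => hn ⟨h.1.le, h.2.le⟩
  simp [betaPDFReal, this]

lemma sphere_beta {Ω : Type*} [MeasurableSpace Ω] (P : Measure Ω) [IsProbabilityMeasure P]
    (d m : ℕ) (U : Ω → Fin d → ℝ) (hU : IsUniformOnSphere P U) (T : Finset (Fin d))
    (hT : T.card = m) (hm : 0 < m) (hmd : m < d)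
    (W : Ω → ℝ) (hWmeas : Measurable W)
    (hW : P.map W = volume.withDensity
      (fun x => ENNReal.ofReal (_root_.betaPDF ((m : ℝ) / 2) (((d : ℝ) - (m : ℝ)) / 2) x))) :
    P.map (fun ω => ∑ i ∈ T, U ω i ^ 2) = P.map W := by
  have hUm := hU.1
  have hBm : Measurable (fun ω => ∑ i ∈ T, U ω i ^ 2) := by fun_prop
  have := Measure.isProbabilityMeasure_map (μ := P) hWmeas.aemeasurable
  have := Measure.isProbabilityMeasure_map (μ := P) hBm.aemeasurable
  have hmR : (0:ℝ) < m := by exact_mod_cast hm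
  have hmdR : (m:ℝ) < d := by exact_mod_cast hmd
  have hone : ∀ ω, ∑ i, U ω i ^ 2 = 1 := by
    intro ω
    have h1 := hU.2.1 ω
    rwa [eNorm, Real.sqrt_eq_one] at h1
  apply moments_ext
  · refine (ae_map_iff hBm.aemeasurable (p := fun x => x ∈ Set.Icc (0:ℝ) 1) measurableSet_Icc).2 ?_
    refine Filter.Eventually.of_forall fun ω => ⟨Finset.sum_nonneg fun _ _ => sq_nonneg _, ?_⟩
    rw [← hone ω]
    exact Finset.sum_le_sum_of_subset_of_nonneg (Finset.subset_univ _) fun _ _ _ => sq_nonneg _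
  · rw [hW]; exact beta_supp _ _
  · intro k
    rw [hW, beta_moment (by positivity) (by linarith),
      integral_map hBm.aemeasurable (by fun_prop)]
    have : Nonempty T := by
      obtain ⟨i, hi⟩ := Finset.card_pos.1 (hT ▸ hm)
      exact ⟨⟨i, hi⟩⟩
    have i₀ : Fin d := ⟨0, by omega⟩
    have : Nonempty (Fin d) := ⟨i₀⟩
    have e1 := unif_moment_aux P d U hU i₀ k T (fun i => i.1) Subtype.val_injective
    have e2 := unif_moment_aux P d U hU i₀ k (Fin d) id Function.injective_id
    simp only [id, hone, one_pow, integral_const, probReal_univ, smul_eq_mul, one_mul,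
      Fintype.card_fin] at e2
    rw [Fintype.card_coe, hT] at e1
    have hs : ∀ ω, ∑ i : T, U ω i.1 ^ 2 = ∑ i ∈ T, U ω i ^ 2 := fun ω =>
      Finset.sum_coe_sort T (fun i => U ω i ^ 2)
    simp_rw [hs] at e1
    rw [show (m:ℝ)/2 + ((d:ℝ) - m)/2 = d/2 by ring]
    have dpos : (0:ℝ) < d := by linarith
    have g1 : 0 < Real.Gamma ((m:ℝ)/2) := Real.Gamma_pos_of_pos (by positivity)
    have g2 : 0 < Real.Gamma ((d:ℝ)/2 + k) := Real.Gamma_pos_of_pos (by positivity)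
    have g3 : 0 < Real.Gamma ((k:ℝ) + 1/2) := Real.Gamma_pos_of_pos (by positivity)
    rw [eq_div_iff (by positivity)]
    apply mul_left_cancel₀ g3.ne'
    linear_combination Real.Gamma ((d:ℝ)/2 + k) * e1 - Real.Gamma ((m:ℝ)/2 + k) * e2

lemma spectral_sum (d : ℕ) (A : Matrix (Fin d) (Fin d) ℝ) (hH : (A * Aᵀ).IsHermitian) :
    ∃ (mu : Fin d → ℝ) (D : Matrix (Fin d) (Fin d) ℝ), D * Dᵀ = 1 ∧ (∀ i, 0 ≤ mu i) ∧
      (∀ x : Fin d → ℝ, ∑ i, (A.mulVec x) i ^ 2 = ∑ i, mu i * (D.mulVec x) i ^ 2) ∧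
      Multiset.map mu Finset.univ.val = Multiset.map hH.eigenvalues Finset.univ.val := by
  have hps : (Aᵀ * A).PosSemidef := by
    have := posSemidef_conjTranspose_mul_self A
    rwa [conjTranspose_eq_transpose_of_trivial] at this
  have hB := hps.isHermitian
  have hEE : (star (hB.eigenvectorUnitary : Matrix (Fin d) (Fin d) ℝ)) *
      (hB.eigenvectorUnitary : Matrix (Fin d) (Fin d) ℝ) = 1 := Unitary.coe_star_mul_self _
  have hst : star (hB.eigenvectorUnitary : Matrix (Fin d) (Fin d) ℝ) =
      (hB.eigenvectorUnitary : Matrix (Fin d) (Fin d) ℝ)ᵀ := by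
    rw [star_eq_conjTranspose, conjTranspose_eq_transpose_of_trivial]
  rw [hst] at hEE
  refine ⟨hB.eigenvalues, (hB.eigenvectorUnitary : Matrix (Fin d) (Fin d) ℝ)ᵀ, ?_,
    hps.eigenvalues_nonneg, ?_, ?_⟩
  · rw [transpose_transpose]; exact hEE
  · intro x
    have hsp := hB.spectral_theorem
    rw [Unitary.conjStarAlgAut_apply, hst] at hsp
    generalize (hB.eigenvectorUnitary : Matrix (Fin d) (Fin d) ℝ) = E at hsp ⊢
    have h1 : ∑ i, (A.mulVec x) i ^ 2 = x ⬝ᵥ ((Aᵀ * A).mulVec x) := by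
      rw [← mulVec_mulVec, dotProduct_mulVec, vecMul_transpose]
      simp [dotProduct, sq]
    generalize hB.eigenvalues = mu at hsp ⊢
    rw [h1, hsp, ← mulVec_mulVec, ← mulVec_mulVec, dotProduct_mulVec, ← mulVec_transpose]
    simp only [dotProduct, mulVec_diagonal]
    refine Finset.sum_congr rfl fun i _ => ?_
    simp
    ring
  · have h1 := hB.roots_charpoly_eq_eigenvalues
    have h2 := hH.roots_charpoly_eq_eigenvalues
    rw [charpoly_mul_comm, h2] at h1
    exact h1.symm

lemma eNorm_sq {d : ℕ} (x : Fin d → ℝ) : eNorm x ^ 2 = ∑ i, x i ^ 2 :=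
  Real.sq_sqrt (Finset.sum_nonneg fun _ _ => sq_nonneg _)

lemma uniform_rot {Ω : Type*} [MeasurableSpace Ω] (P : Measure Ω) {d : ℕ}
    (U : Ω → Fin d → ℝ) (hU : IsUniformOnSphere P U) (D : Matrix (Fin d) (Fin d) ℝ)
    (hD : D * Dᵀ = 1) : IsUniformOnSphere P (fun ω => D.mulVec (U ω)) := by
  have hm : ∀ C : Matrix (Fin d) (Fin d) ℝ, Measurable (fun x : Fin d → ℝ => C.mulVec x) :=
    fun C => (Continuous.matrix_mulVec continuous_const continuous_id).measurable
  refine ⟨(hm D).comp hU.1, fun ω => ?_, fun C hC => ?_⟩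
  · rw [← hU.2.1 ω]
    unfold eNorm
    congr 1
    have h1 : ∑ i, (D.mulVec (U ω)) i ^ 2 = U ω ⬝ᵥ ((Dᵀ * D).mulVec (U ω)) := by
      rw [← mulVec_mulVec, dotProduct_mulVec, vecMul_transpose]
      simp [dotProduct, sq]
    rw [h1, mul_eq_one_comm.1 hD, one_mulVec]
    simp [dotProduct, sq]
  · simp_rw [mulVec_mulVec]
    rw [hU.2.2 D hD]
    apply hU.2.2
    rw [transpose_mul, Matrix.mul_assoc, ← Matrix.mul_assoc D, hD, Matrix.one_mul, hC]

/-- The elementary bounds (10): for every `u > 0`,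
`P(λ_(m) R² > u) = 1 - F(√(u/λ_(m))) ≥ P(‖X‖² ≥ u) ≥ P(λ_(m) R² W > u)`
where `W ~ Beta(m/2, (d-m)/2)` is independent of `R`. -/
theorem norm_elliptical_bounds
    {Ω : Type*} [MeasurableSpace Ω] (P : Measure Ω) [IsProbabilityMeasure P]
    (d : ℕ) [NeZero d] (hd : 2 ≤ d)
    (A : Matrix (Fin d) (Fin d) ℝ)
    (R : Ω → ℝ) (U : Ω → Fin d → ℝ)
    (hRmeas : Measurable R) (hRpos : ∀ ω, 0 < R ω)
    (hU : IsUniformOnSphere P U)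
    (hInd : IndepFun R U P)
    (X : Ω → Fin d → ℝ) (hX : ∀ ω, X ω = A.mulVec (R ω • U ω))
    -- `F` is the distribution function of `R`
    (F : ℝ → ℝ) (hF : ∀ u, F u = (P {ω | R ω ≤ u}).toReal) (hF0 : F 0 = 0)
    -- `lam` enumerates the eigenvalues of `Σ = A Aᵀ` in decreasing order
    (lam : Fin d → ℝ) (hmono : Antitone lam)
    (hlam : ∃ (hH : (A * Aᵀ).IsHermitian) (σ : Equiv.Perm (Fin d)),
      ∀ i, lam i = hH.eigenvalues (σ i))
    (hlam0 : 0 < lam 0)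
    -- `m` is the multiplicity of the largest eigenvalue `lam 0 = λ_(m)`
    (m : ℕ) (hm : m = (Finset.univ.filter fun j => lam j = lam 0).card)
    (hmd : m < d)
    -- `W ~ Beta(m/2, (d-m)/2)` is independent of `R`
    (W : Ω → ℝ) (hWmeas : Measurable W)
    (hW : P.map W = volume.withDensity
      (fun x => ENNReal.ofReal (betaPDF ((m : ℝ) / 2) (((d : ℝ) - (m : ℝ)) / 2) x)))
    (hIndRW : IndepFun R W P) :
    ∀ u : ℝ, 0 < u →
      (P {ω | lam 0 * R ω ^ 2 > u}).toReal = 1 - F (Real.sqrt (u / lam 0)) ∧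
      (P {ω | eNorm (X ω) ^ 2 ≥ u}).toReal ≤ (P {ω | lam 0 * R ω ^ 2 > u}).toReal ∧
      (P {ω | lam 0 * R ω ^ 2 * W ω > u}).toReal ≤ (P {ω | eNorm (X ω) ^ 2 ≥ u}).toReal := by
  obtain ⟨hH, σ, hσ⟩ := hlam
  obtain ⟨mu, D, hD, hmu0, hsum, hms⟩ := spectral_sum d A hH
  have hle : ∀ i, mu i ≤ lam 0 := by
    intro i
    have : mu i ∈ Multiset.map hH.eigenvalues Finset.univ.val := by
      rw [← hms]; exact Multiset.mem_map_of_mem _ (Finset.mem_univ i)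
    obtain ⟨j, -, hj⟩ := Multiset.mem_map.1 this
    rw [← hj, ← σ.apply_symm_apply j, ← hσ]
    exact hmono (Fin.zero_le _)
  set T : Finset (Fin d) := Finset.univ.filter fun j => mu j = lam 0 with hTdef
  have hT : T.card = m := by
    have c1 : T.card = Multiset.count (lam 0) (Multiset.map mu Finset.univ.val) := by
      rw [Multiset.count_map, hTdef, Finset.card_def, Finset.filter_val]
      simp only [eq_comm]
    have c2 : (Finset.univ.filter fun j => hH.eigenvalues j = lam 0).card =
        Multiset.count (lam 0) (Multiset.map hH.eigenvalues Finset.univ.val) := by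
      rw [Multiset.count_map, Finset.card_def, Finset.filter_val]
      simp only [eq_comm]
    rw [c1, hms, ← c2, hm]
    symm
    refine Finset.card_bij (fun j _ => σ j) ?_ (fun a _ b _ h => σ.injective h) ?_
    · intro j hj
      simp only [Finset.mem_filter, Finset.mem_univ, true_and] at hj ⊢
      rw [← hσ, hj]
    · intro j hj
      simp only [Finset.mem_filter, Finset.mem_univ, true_and] at hj
      refine ⟨σ.symm j, ?_, by simp⟩
      simp [hσ, hj]
  have hm0 : 0 < m := by
    rw [hm]
    exact Finset.card_pos.2 ⟨0, by simp⟩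
  set V : Ω → Fin d → ℝ := fun ω => D.mulVec (U ω) with hVdef
  have hV : IsUniformOnSphere P V := uniform_rot P U hU D hD
  have hVm := hV.1
  have hone : ∀ ω, ∑ i, V ω i ^ 2 = 1 := fun ω => by
    rw [← eNorm_sq, hV.2.1 ω, one_pow]
  set B : Ω → ℝ := fun ω => ∑ i ∈ T, V ω i ^ 2 with hBdef
  have hBm : Measurable B := by fun_prop
  have hBW : P.map B = P.map W := sphere_beta P d m V hV T hT hm0 hmd W hWmeas hW
  have hIndRB : IndepFun R B P := by
    have hg : Measurable (fun x : Fin d → ℝ => ∑ i ∈ T, (D.mulVec x) i ^ 2) := by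
      have : Measurable (fun x : Fin d → ℝ => D.mulVec x) :=
        (Continuous.matrix_mulVec continuous_const continuous_id).measurable
      fun_prop
    exact hInd.comp measurable_id hg
  have hjoint : P.map (fun ω => (R ω, B ω)) = P.map (fun ω => (R ω, W ω)) := by
    rw [(indepFun_iff_map_prod_eq_prod_map_map hRmeas.aemeasurable hBm.aemeasurable).1 hIndRB,
      (indepFun_iff_map_prod_eq_prod_map_map hRmeas.aemeasurable hWmeas.aemeasurable).1 hIndRW,
      hBW]
  have hnorm : ∀ ω, eNorm (X ω) ^ 2 = R ω ^ 2 * ∑ i, mu i * V ω i ^ 2 := by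
    intro ω
    rw [eNorm_sq, hX, hsum, Finset.mul_sum]
    refine Finset.sum_congr rfl fun i _ => ?_
    rw [mulVec_smul]
    simp only [Pi.smul_apply, smul_eq_mul, hVdef]
    ring
  have hQB : ∀ ω, lam 0 * B ω ≤ ∑ i, mu i * V ω i ^ 2 := by
    intro ω
    calc lam 0 * B ω = ∑ i ∈ T, mu i * V ω i ^ 2 := by
          rw [hBdef, Finset.mul_sum]
          refine Finset.sum_congr rfl fun i hi => ?_
          rw [(Finset.mem_filter.1 hi).2]
      _ ≤ _ := Finset.sum_le_sum_of_subset_of_nonneg (Finset.subset_univ _)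
          fun i _ _ => mul_nonneg (hmu0 i) (sq_nonneg _)
  have hQle : ∀ ω, ∑ i, mu i * V ω i ^ 2 ≤ lam 0 := by
    intro ω
    calc ∑ i, mu i * V ω i ^ 2 ≤ ∑ i, lam 0 * V ω i ^ 2 :=
          Finset.sum_le_sum fun i _ => mul_le_mul_of_nonneg_right (hle i) (sq_nonneg _)
      _ = lam 0 := by rw [← Finset.mul_sum, hone, mul_one]
  have hQlt : ∀ ω, B ω ≠ 1 → ∑ i, mu i * V ω i ^ 2 < lam 0 := by
    intro ω hB1
    refine lt_of_le_of_ne (hQle ω) fun heq => hB1 ?_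
    have hz : ∑ i, (lam 0 - mu i) * V ω i ^ 2 = 0 := by
      simp_rw [sub_mul]
      rw [Finset.sum_sub_distrib, ← Finset.mul_sum, hone, heq]
      ring
    rw [Finset.sum_eq_zero_iff_of_nonneg
      fun i _ => mul_nonneg (sub_nonneg.2 (hle i)) (sq_nonneg _)] at hz
    rw [hBdef, ← hone ω]
    refine Finset.sum_subset (Finset.subset_univ _) fun i _ hi => ?_
    have := hz i (Finset.mem_univ i)
    rcases mul_eq_zero.1 this with h | h
    · exact absurd (Finset.mem_filter.2 ⟨Finset.mem_univ i, (sub_eq_zero.1 h).symm⟩) hi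
    · exact h
  have hBae : ∀ᵐ ω ∂P, B ω ≠ 1 := by
    have h1 : P.map B {1} = 0 := by
      rw [hBW, hW]
      exact withDensity_absolutelyContinuous _ _ (by simp)
    rw [Measure.map_apply hBm (measurableSet_singleton 1)] at h1
    exact measure_eq_zero_iff_ae_notMem.1 h1
  intro u hu
  refine ⟨?_, ?_, ?_⟩
  · have hset : {ω | lam 0 * R ω ^ 2 > u} = {ω | R ω ≤ Real.sqrt (u / lam 0)}ᶜ := by
      ext ω
      simp only [Set.mem_setOf_eq, Set.mem_compl_iff, not_le, gt_iff_lt]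
      rw [Real.sqrt_lt' (hRpos ω), div_lt_iff₀ hlam0, mul_comm]
    have hmeas : MeasurableSet {ω | R ω ≤ Real.sqrt (u / lam 0)} :=
      measurableSet_le hRmeas measurable_const
    rw [hset, hF]
    exact probReal_compl_eq_one_sub hmeas
  · refine ENNReal.toReal_mono (measure_ne_top _ _) (measure_mono_ae ?_)
    filter_upwards [hBae] with ω hω hx
    have hx' : u ≤ eNorm (X ω) ^ 2 := hx
    show u < lam 0 * R ω ^ 2
    rw [hnorm] at hx'
    have := mul_lt_mul_of_pos_left (hQlt ω hω) (pow_pos (hRpos ω) 2)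
    linarith
  · have hS : MeasurableSet {z : ℝ × ℝ | lam 0 * z.1 ^ 2 * z.2 > u} :=
      measurableSet_lt measurable_const (by fun_prop)
    have h1 : P {ω | lam 0 * R ω ^ 2 * W ω > u} = P {ω | lam 0 * R ω ^ 2 * B ω > u} := by
      have e1 := Measure.map_apply (μ := P) (hRmeas.prodMk hWmeas) hS
      have e2 := Measure.map_apply (μ := P) (hRmeas.prodMk hBm) hS
      rw [hjoint, e1] at e2
      exact e2
    rw [h1]
    refine ENNReal.toReal_mono (measure_ne_top _ _) (measure_mono fun ω hω => ?_)
    have hω' : u < lam 0 * R ω ^ 2 * B ω := hω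
    show u ≤ eNorm (X ω) ^ 2
    rw [hnorm]
    have := mul_le_mul_of_nonneg_left (hQB ω) (sq_nonneg (R ω))
    linarith
end
end

section
/- Let X = A R U be a Kotz Type III elliptical random vector in ℝ^d, d ≥ 2, i.e. 1 − F(u) = (1+o(1)) c u^N exp(−δ u^τ) as u → ∞ with c, δ, τ ∈ (0,∞), N ∈ ℝ. Then, as u → ∞, P(‖X‖ > u √λ_(m)) = (1+o(1)) c C_* (Γ(d/2)/Γ(m/2)) (2/(δτ))^{(d−m)/2} u^{τ(m−d)/2 + N} exp(−δ u^τ). -/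
open MeasureTheory Filter Topology Matrix ProbabilityTheory

noncomputable section

lemma dot_self_nonneg {ι : Type*} [Fintype ι] (x : ι → ℝ) : 0 ≤ x ⬝ᵥ x :=
  Finset.sum_nonneg fun i _ => mul_self_nonneg (x i)

lemma exists_orth_map {d : ℕ} (a b : Fin d → ℝ) (h : a ⬝ᵥ a = b ⬝ᵥ b) :
    ∃ D : Matrix (Fin d) (Fin d) ℝ, D * Dᵀ = 1 ∧ a ᵥ* D = b := by
  by_cases hv : a - b = 0
  · refine ⟨1, by simp, ?_⟩
    rw [Matrix.vecMul_one]; exact sub_eq_zero.mp hv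
  · set v := a - b with hvdef
    have hvv : v ⬝ᵥ v ≠ 0 := fun h0 => hv (dotProduct_self_eq_zero.mp h0)
    have hva : v ⬝ᵥ v = 2 * (a ⬝ᵥ v) := by
      simp only [hvdef, sub_dotProduct, dotProduct_sub]
      rw [dotProduct_comm b a]; linarith
    refine ⟨1 - (2 / (v ⬝ᵥ v)) • vecMulVec v v, ?_, ?_⟩
    · rw [transpose_sub, transpose_one, transpose_smul, transpose_vecMulVec]
      rw [sub_mul, mul_sub, mul_sub, one_mul, one_mul, mul_one, smul_mul_smul_comm,
        vecMulVec_mul_vecMulVec, vecMulVec_smul, smul_smul, sub_sub, sub_eq_self]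
      have : (2 / v ⬝ᵥ v) * (2 / v ⬝ᵥ v) * (v ⬝ᵥ v) = 2 / v ⬝ᵥ v + 2 / v ⬝ᵥ v := by
        field_simp; norm_num
      rw [this, add_smul]; abel
    · rw [Matrix.vecMul_sub, Matrix.vecMul_one, Matrix.vecMul_smul, Matrix.vecMul_vecMulVec]
      rw [smul_smul, show 2 / v ⬝ᵥ v * (a ⬝ᵥ v) = 1 by rw [div_mul_eq_mul_div, ← hva, div_self hvv]]
      simp [hvdef]

lemma char_const {d : ℕ} (μ : Measure (Fin d → ℝ)) 
    (hI : ∀ D : Matrix (Fin d) (Fin d) ℝ, D * Dᵀ = 1 → μ.map (fun x => D.mulVec x) = μ)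
    (g : ℝ → ℂ) (hg : Continuous g) (a b : Fin d → ℝ) (h : a ⬝ᵥ a = b ⬝ᵥ b) :
    ∫ x, g (a ⬝ᵥ x) ∂μ = ∫ x, g (b ⬝ᵥ x) ∂μ := by
  obtain ⟨D, hD, hab⟩ := exists_orth_map a b h
  have hc : ∀ a : Fin d → ℝ, Continuous fun x : Fin d → ℝ => a ⬝ᵥ x := by
    intro a; unfold dotProduct; fun_prop
  conv_lhs => rw [← hI D hD]
  rw [integral_map]
  · simp_rw [dotProduct_mulVec, hab]
  · exact (Continuous.matrix_mulVec continuous_const continuous_id).aemeasurable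
  · exact (hg.comp (hc a)).aestronglyMeasurable

lemma sphere_unique {d : ℕ} (μ ν : Measure (Fin d → ℝ)) [IsProbabilityMeasure μ]
    [IsProbabilityMeasure ν]
    (hμ : ∀ᵐ x ∂μ, x ⬝ᵥ x = 1) (hν : ∀ᵐ x ∂ν, x ⬝ᵥ x = 1)
    (hμI : ∀ D : Matrix (Fin d) (Fin d) ℝ, D * Dᵀ = 1 → μ.map (fun x => D.mulVec x) = μ)
    (hνI : ∀ D : Matrix (Fin d) (Fin d) ℝ, D * Dᵀ = 1 → ν.map (fun x => D.mulVec x) = ν) :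
    μ = ν := by
  have hcont : Continuous fun p : (Fin d → ℝ) × (Fin d → ℝ) => p.1 ⬝ᵥ p.2 := by
    unfold dotProduct; fun_prop
  refine ext_of_integral_char_eq (L := dotProductBilin ℝ ℝ) Real.continuous_probChar
    Real.probChar_ne_one ?_ hcont ?_
  · intro v hv h0
    apply hv
    have := LinearMap.congr_fun h0 v
    exact dotProduct_self_eq_zero.mp this
  · intro w
    set r := Real.sqrt (w ⬝ᵥ w) with hr
    have hrr : r * r = w ⬝ᵥ w := Real.mul_self_sqrt (dot_self_nonneg w)
    set g : ℝ → ℂ := fun t => (Real.probChar t : ℂ) with hg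
    have hgc : Continuous g := by
      exact continuous_subtype_val.comp Real.continuous_probChar
    have hgb : ∀ t, ‖g t‖ = 1 := fun t => Circle.norm_coe _
    have key : ∀ (μ ν : Measure (Fin d → ℝ)) [IsProbabilityMeasure μ] [IsProbabilityMeasure ν],
        (∀ᵐ x ∂ν, x ⬝ᵥ x = 1) →
        (∀ D : Matrix (Fin d) (Fin d) ℝ, D * Dᵀ = 1 → μ.map (fun x => D.mulVec x) = μ) →
        ∫ x, g (w ⬝ᵥ x) ∂μ = ∫ y, ∫ x, g (r * (y ⬝ᵥ x)) ∂μ ∂ν := by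
      intro μ ν _ _ hν hμI
      have : ∀ᵐ y ∂ν, ∫ x, g (r * (y ⬝ᵥ x)) ∂μ = ∫ x, g (w ⬝ᵥ x) ∂μ := by
        filter_upwards [hν] with y hy
        simp_rw [← smul_eq_mul, ← smul_dotProduct]
        apply char_const μ hμI g hgc
        simp [hy, hrr]
      rw [integral_congr_ae this]; simp
    have hint : Integrable (Function.uncurry fun (y x : Fin d → ℝ) => g (r * (y ⬝ᵥ x)))
        (ν.prod μ) := by
      refine Integrable.of_bound (C := 1) ?_ ?_
      · exact (hgc.comp (continuous_const.mul hcont)).aestronglyMeasurable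
      · exact Eventually.of_forall fun x => (hgb _).le
    have e1 : ∫ x, g (w ⬝ᵥ x) ∂μ = ∫ x, g (w ⬝ᵥ x) ∂ν := by
      rw [key μ ν hν hμI, key ν μ hμ hνI, integral_integral_swap hint]
      simp_rw [dotProduct_comm]
    simp_rw [dotProduct_comm w] at e1
    exact e1

def gam (d : ℕ) : Measure (Fin d → ℝ) :=
  volume.withDensity (fun x => ENNReal.ofReal (Real.exp (-Real.pi * (x ⬝ᵥ x))))

def nrmz {d : ℕ} (x : Fin d → ℝ) : Fin d → ℝ := (Real.sqrt (x ⬝ᵥ x))⁻¹ • x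

lemma continuous_dot_self {ι : Type*} [Fintype ι] : Continuous fun x : ι → ℝ => x ⬝ᵥ x := by
  unfold dotProduct; fun_prop

lemma integral_gauss_pi {ι : Type*} [Fintype ι] (b : ι → ℝ) :
    ∫ x : ι → ℝ, Real.exp (-∑ i, b i * x i ^ 2) = ∏ i, Real.sqrt (Real.pi / b i) := by
  simp_rw [← Finset.sum_neg_distrib, Real.exp_sum, ← neg_mul]
  rw [integral_fintype_prod_volume_eq_prod (f := fun i (v : ℝ) => Real.exp (-b i * v ^ 2))]
  simp_rw [integral_gaussian]

instance gam_prob (d : ℕ) : IsProbabilityMeasure (gam d) := by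
  constructor
  have h1 : ∫ x : Fin d → ℝ, Real.exp (-Real.pi * (x ⬝ᵥ x)) = 1 := by
    have := integral_gauss_pi (ι := Fin d) (fun _ => Real.pi)
    rw [div_self Real.pi_ne_zero] at this
    simp only [Real.sqrt_one, Finset.prod_const_one] at this
    rw [← this]
    congr 1; ext x
    simp only [dotProduct, Finset.mul_sum, ← Finset.sum_neg_distrib]
    congr 1; apply Finset.sum_congr rfl; intros; ring
  rw [gam, withDensity_apply _ MeasurableSet.univ, Measure.restrict_univ,
    ← ofReal_integral_eq_lintegral_ofReal, h1, ENNReal.ofReal_one]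
  · by_contra hn
    rw [integral_undef hn] at h1; norm_num at h1
  · exact Eventually.of_forall fun x => (Real.exp_pos _).le

lemma orth_dot {d : ℕ} (D : Matrix (Fin d) (Fin d) ℝ) (hD : D * Dᵀ = 1) (x : Fin d → ℝ) :
    (D *ᵥ x) ⬝ᵥ (D *ᵥ x) = x ⬝ᵥ x := by
  rw [dotProduct_mulVec, ← mulVec_transpose, mulVec_mulVec, mul_eq_one_comm.mp hD, one_mulVec]

lemma measurable_mulVec' {d : ℕ} (D : Matrix (Fin d) (Fin d) ℝ) :
    Measurable (fun x : Fin d → ℝ => D *ᵥ x) :=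
  (Continuous.matrix_mulVec continuous_const continuous_id).measurable

lemma orth_vol {d : ℕ} (D : Matrix (Fin d) (Fin d) ℝ) (hD : D * Dᵀ = 1) :
    MeasurePreserving (fun x : Fin d → ℝ => D *ᵥ x) := by
  refine ⟨measurable_mulVec' D, ?_⟩
  have h1 : D.det * D.det = 1 := by
    have := congrArg Matrix.det hD
    rwa [det_mul, det_transpose, det_one] at this
  have h2 : |D.det| = 1 := by
    rcases mul_self_eq_one_iff.mp h1 with h | h <;> simp [h]
  have := Real.map_matrix_volume_pi_eq_smul_volume_pi (M := D) (by intro h; simp [h] at h1)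
  rw [abs_inv, h2, inv_one, ENNReal.ofReal_one, one_smul] at this
  exact this

lemma gam_inv {d : ℕ} (D : Matrix (Fin d) (Fin d) ℝ) (hD : D * Dᵀ = 1) :
    (gam d).map (fun x => D *ᵥ x) = gam d := by
  have hm : Measurable fun x : Fin d → ℝ => ENNReal.ofReal (Real.exp (-Real.pi * (x ⬝ᵥ x))) := by
    have := continuous_dot_self (ι := Fin d)
    exact (Real.continuous_exp.comp (continuous_const.mul this)).measurable.ennreal_ofReal
  ext s hs
  rw [Measure.map_apply (measurable_mulVec' D) hs, gam,
    withDensity_apply _ (measurable_mulVec' D hs), withDensity_apply _ hs,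
    ← (orth_vol D hD).setLIntegral_comp_preimage hs hm]
  simp_rw [orth_dot D hD]

lemma measurable_nrmz {d : ℕ} : Measurable (nrmz (d := d)) := by
  have := (continuous_dot_self (ι := Fin d)).measurable
  unfold nrmz
  exact (this.sqrt.inv).smul measurable_id

lemma nu_eq {d : ℕ} (hd : 2 ≤ d) (μ : Measure (Fin d → ℝ)) [IsProbabilityMeasure μ]
    (hμ : ∀ᵐ x ∂μ, x ⬝ᵥ x = 1)
    (hμI : ∀ D : Matrix (Fin d) (Fin d) ℝ, D * Dᵀ = 1 → μ.map (fun x => D.mulVec x) = μ) :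
    μ = (gam d).map nrmz := by
  have : Nonempty (Fin d) := ⟨⟨0, by omega⟩⟩
  have : IsProbabilityMeasure ((gam d).map nrmz) :=
    Measure.isProbabilityMeasure_map measurable_nrmz.aemeasurable
  apply sphere_unique _ _ hμ _ hμI
  · intro D hD
    conv_rhs => rw [← gam_inv D hD]
    rw [Measure.map_map (measurable_mulVec' D) measurable_nrmz,
      Measure.map_map measurable_nrmz (measurable_mulVec' D)]
    congr 1
    ext1 x
    simp only [Function.comp, nrmz, orth_dot D hD, mulVec_smul]
  · have hms : MeasurableSet {x : Fin d → ℝ | x ⬝ᵥ x = 1} :=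
      (continuous_dot_self (ι := Fin d)).measurable (measurableSet_singleton 1)
    rw [ae_map_iff measurable_nrmz.aemeasurable hms]
    have h0 : ∀ᵐ x ∂(gam d), x ≠ 0 := by
      refine (withDensity_absolutelyContinuous _ _).ae_le ?_
      have h1 : ∀ᵐ x : Fin d → ℝ, x ≠ 0 := by rw [ae_iff]; simp
      exact h1
    filter_upwards [h0] with x hx
    have hxx : x ⬝ᵥ x ≠ 0 := fun h => hx (dotProduct_self_eq_zero.mp h)
    have hs := Real.mul_self_sqrt (dot_self_nonneg x)
    have : Real.sqrt (x ⬝ᵥ x) ≠ 0 := by intro h; rw [h] at hs; simp at hs; exact hxx hs.symm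
    simp only [nrmz, smul_dotProduct, dotProduct_smul, smul_eq_mul]
    nth_rewrite 3 [← hs]
    field_simp

lemma lintegral_scale {ι : Type*} [Fintype ι] (g : (ι → ℝ) → ENNReal) (hg : Measurable g)
    {r : ℝ} (hr : 0 < r) :
    ∫⁻ x, g x = ENNReal.ofReal (r ^ Fintype.card ι) * ∫⁻ x, g (r • x) := by
  have h := Measure.map_addHaar_smul (volume : Measure (ι → ℝ)) hr.ne'
  have h2 : ∫⁻ x, g (r • x) = ∫⁻ x, g x ∂(Measure.map (fun x : ι → ℝ => r • x) volume) := by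
    rw [lintegral_map hg (measurable_const_smul r)]
  rw [h2, h, lintegral_smul_measure, Module.finrank_fintype_fun_eq_card, smul_eq_mul, ← mul_assoc,
    ← ENNReal.ofReal_mul (by positivity), abs_of_pos (by positivity),
    mul_inv_cancel₀ (by positivity), ENNReal.ofReal_one, one_mul]

lemma sphere_formula {d : ℕ} (p : Fin d → Prop) [DecidablePred p] (hp : ∃ i, p i)
    (a : Fin d → ℝ) (ha : ∀ i, p i → a i = 1) (f : ℝ → ENNReal) (hf : Measurable f) :
    ∫⁻ x, f (∑ i, a i * x i ^ 2) ∂((gam d).map nrmz) =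
      (∫⁻ y : {i // p i} → ℝ, ENNReal.ofReal (Real.sqrt (y ⬝ᵥ y) ^ Fintype.card {i // ¬ p i} *
        Real.exp (-Real.pi * (y ⬝ᵥ y)))) *
      ∫⁻ w : {i // ¬ p i} → ℝ, f ((1 + ∑ j : {i // ¬ p i}, a j * w j ^ 2) / (1 + w ⬝ᵥ w)) *
        ENNReal.ofReal ((1 + w ⬝ᵥ w) ^ (-(d : ℝ) / 2)) := by
  obtain ⟨i0, hi0⟩ := hp
  have : Nonempty {i // p i} := ⟨⟨i0, hi0⟩⟩
  set k := Fintype.card {i // ¬ p i} with hk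
  have hcard : Fintype.card {i // p i} + k = d := by
    have := Fintype.card_subtype_compl p
    have h2 := Fintype.card_subtype_le p
    rw [hk, this]; simp at h2 ⊢; omega
  have hA : Measurable fun x : Fin d → ℝ => ∑ i, a i * x i ^ 2 := by fun_prop
  have hAw : Measurable fun w : {i // ¬ p i} → ℝ => ∑ j : {i // ¬ p i}, a j * w j ^ 2 := by fun_prop
  have hdd : Measurable fun x : Fin d → ℝ => x ⬝ᵥ x := continuous_dot_self.measurable
  have hdw : Measurable fun x : {i // ¬ p i} → ℝ => x ⬝ᵥ x := continuous_dot_self.measurable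
  have hdy : Measurable fun x : {i // p i} → ℝ => x ⬝ᵥ x := continuous_dot_self.measurable
  have hfA : Measurable fun x : Fin d → ℝ => f (∑ i, a i * x i ^ 2) := hf.comp hA
  have hfn : Measurable fun x : Fin d → ℝ => f (∑ i, a i * nrmz x i ^ 2) :=
    hfA.comp measurable_nrmz
  rw [lintegral_map hfA measurable_nrmz, gam, lintegral_withDensity_eq_lintegral_mul _
    (by fun_prop) hfn]
  -- split
  set G : ({i // p i} → ℝ) × ({i // ¬ p i} → ℝ) → ENNReal := fun q =>
    ENNReal.ofReal (Real.exp (-Real.pi * (q.1 ⬝ᵥ q.1 + q.2 ⬝ᵥ q.2))) *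
      f ((q.1 ⬝ᵥ q.1 + ∑ j : {i // ¬ p i}, a j * q.2 j ^ 2) / (q.1 ⬝ᵥ q.1 + q.2 ⬝ᵥ q.2)) with hG
  have hGm : Measurable G := by
    have h1 : Measurable fun q : ({i // p i} → ℝ) × ({i // ¬ p i} → ℝ) => q.1 ⬝ᵥ q.1 :=
      hdy.comp measurable_fst
    have h2 : Measurable fun q : ({i // p i} → ℝ) × ({i // ¬ p i} → ℝ) => q.2 ⬝ᵥ q.2 :=
      hdw.comp measurable_snd
    have h3 : Measurable fun q : ({i // p i} → ℝ) × ({i // ¬ p i} → ℝ) => ∑ j : {i // ¬ p i}, a j * q.2 j ^ 2 :=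
      hAw.comp measurable_snd
    exact (by fun_prop : Measurable _).mul (hf.comp ((h1.add h3).div (h1.add h2)))
  have e1 : ∀ z : Fin d → ℝ, ((fun x : Fin d → ℝ => ENNReal.ofReal (Real.exp (-Real.pi * (x ⬝ᵥ x)))) *
      (fun x : Fin d → ℝ => f (∑ i, a i * nrmz x i ^ 2)) : (Fin d → ℝ) → ENNReal) z =
      G (MeasurableEquiv.piEquivPiSubtypeProd (fun _ => ℝ) p z) := by
    intro z
    have hs1 : z ⬝ᵥ z = (∑ i : {i // p i}, z i * z i) + ∑ i : {i // ¬ p i}, z i * z i := by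
      rw [dotProduct, ← Fintype.sum_subtype_add_sum_subtype p]
    have hs2 : ∑ i, a i * z i ^ 2 =
        (∑ i : {i // p i}, z i * z i) + ∑ i : {i // ¬ p i}, a i * z i ^ 2 := by
      rw [← Fintype.sum_subtype_add_sum_subtype p]
      congr 1
      refine Finset.sum_congr rfl fun i _ => ?_
      rw [ha i i.2]; ring
    have hs3 : ∑ i, a i * nrmz z i ^ 2 = (∑ i, a i * z i ^ 2) / (z ⬝ᵥ z) := by
      rw [Finset.sum_div]
      refine Finset.sum_congr rfl fun i _ => ?_
      simp only [nrmz, Pi.smul_apply, smul_eq_mul, mul_pow, inv_pow,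
        Real.sq_sqrt (dot_self_nonneg z)]
      ring
    simp only [Pi.mul_apply, hs3, hs2]
    rw [hs1]
    rfl
  rw [lintegral_congr e1, (volume_preserving_piEquivPiSubtypeProd (fun _ : Fin d => ℝ) p).lintegral_comp
    hGm, Measure.volume_eq_prod, lintegral_prod _ hGm.aemeasurable]
  -- substitute in w
  have e2 : ∀ᵐ y : {i // p i} → ℝ, ∫⁻ w, G (y, w) =
      ∫⁻ w : {i // ¬ p i} → ℝ, f ((1 + ∑ j : {i // ¬ p i}, a j * w j ^ 2) / (1 + w ⬝ᵥ w)) *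
        ENNReal.ofReal (Real.sqrt (y ⬝ᵥ y) ^ k *
          Real.exp (-Real.pi * ((y ⬝ᵥ y) * (1 + w ⬝ᵥ w)))) := by
    have h0 : ∀ᵐ y : {i // p i} → ℝ, y ≠ 0 := by rw [ae_iff]; simp
    filter_upwards [h0] with y hy
    have hyy : 0 < y ⬝ᵥ y := lt_of_le_of_ne (dot_self_nonneg y)
      fun h => hy (dotProduct_self_eq_zero.mp h.symm)
    rw [lintegral_scale (fun w => G (y, w)) (hGm.comp measurable_prodMk_left)
      (Real.sqrt_pos.mpr hyy), ← lintegral_const_mul]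
    swap
    · exact (hGm.comp measurable_prodMk_left).comp (measurable_const_smul _)
    refine lintegral_congr fun w => ?_
    have hr2 := Real.sq_sqrt hyy.le
    set r := Real.sqrt (y ⬝ᵥ y)
    simp only [hG, smul_dotProduct, dotProduct_smul, smul_eq_mul, Pi.smul_apply, mul_pow]
    have h1 : y ⬝ᵥ y + r * (r * w ⬝ᵥ w) = (y ⬝ᵥ y) * (1 + w ⬝ᵥ w) := by
      rw [← mul_assoc, ← sq, hr2]; ring
    have h2 : y ⬝ᵥ y + ∑ j : {i // ¬ p i}, a j * (r ^ 2 * w j ^ 2) =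
        (y ⬝ᵥ y) * (1 + ∑ j : {i // ¬ p i}, a j * w j ^ 2) := by
      rw [mul_add, Finset.mul_sum, mul_one, hr2]
      congr 1; refine Finset.sum_congr rfl fun i _ => ?_
      ring
    rw [h1, h2, mul_div_mul_left _ _ hyy.ne', ENNReal.ofReal_mul (by positivity)]
    ring
  rw [lintegral_congr_ae e2, lintegral_lintegral_swap]
  swap
  · apply Measurable.aemeasurable
    have h1 : Measurable fun q : ({i // p i} → ℝ) × ({i // ¬ p i} → ℝ) => q.1 ⬝ᵥ q.1 :=
      hdy.comp measurable_fst
    have h2 : Measurable fun q : ({i // p i} → ℝ) × ({i // ¬ p i} → ℝ) => q.2 ⬝ᵥ q.2 :=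
      hdw.comp measurable_snd
    have h3 : Measurable fun q : ({i // p i} → ℝ) × ({i // ¬ p i} → ℝ) => ∑ j : {i // ¬ p i}, a j * q.2 j ^ 2 :=
      hAw.comp measurable_snd
    exact (hf.comp ((measurable_const.add h3).div (measurable_const.add h2))).mul
      (by fun_prop : Measurable _)
  have hsc : ∀ w : {i // ¬ p i} → ℝ, 0 < 1 + w ⬝ᵥ w := fun w => by
    have := dot_self_nonneg w; linarith
  have hK : Measurable fun y : {i // p i} → ℝ => ENNReal.ofReal (Real.sqrt (y ⬝ᵥ y) ^ k *
        Real.exp (-Real.pi * (y ⬝ᵥ y))) := by fun_prop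
  rw [← lintegral_const_mul]
  swap
  · exact (hf.comp ((measurable_const.add hAw).div (measurable_const.add hdw))).mul
      (by fun_prop : Measurable _)
  refine lintegral_congr fun w => ?_
  rw [lintegral_const_mul _ (by fun_prop)]
  have e3 : ∫⁻ y : {i // p i} → ℝ, ENNReal.ofReal (Real.sqrt (y ⬝ᵥ y) ^ k *
          Real.exp (-Real.pi * ((y ⬝ᵥ y) * (1 + w ⬝ᵥ w)))) =
      ENNReal.ofReal ((1 + w ⬝ᵥ w) ^ (-(d : ℝ) / 2)) *
      ∫⁻ y : {i // p i} → ℝ, ENNReal.ofReal (Real.sqrt (y ⬝ᵥ y) ^ k *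
          Real.exp (-Real.pi * (y ⬝ᵥ y))) := by
    set s := (1 + w ⬝ᵥ w) with hs
    have hs0 : 0 < s := hsc w
    have ht0 : 0 < (Real.sqrt s)⁻¹ := by positivity
    rw [lintegral_scale _ (by fun_prop) ht0, ← lintegral_const_mul _ (by fun_prop),
      ← lintegral_const_mul _ (by fun_prop)]
    refine lintegral_congr fun y => ?_
    have h1 : ((Real.sqrt s)⁻¹ • y) ⬝ᵥ ((Real.sqrt s)⁻¹ • y) = s⁻¹ * (y ⬝ᵥ y) := by
      simp only [smul_dotProduct, dotProduct_smul, smul_eq_mul]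
      rw [← mul_assoc, ← mul_inv, Real.mul_self_sqrt hs0.le]
    rw [h1, ← ENNReal.ofReal_mul (by positivity), ← ENNReal.ofReal_mul (by positivity),
      Real.sqrt_mul (by positivity), Real.sqrt_inv]
    congr 1
    have h2 : s⁻¹ * (y ⬝ᵥ y) * s = y ⬝ᵥ y := by field_simp
    have h3 : s ^ (-(d : ℝ) / 2) = (Real.sqrt s)⁻¹ ^ Fintype.card {i // p i} * (Real.sqrt s)⁻¹ ^ k := by
      rw [← pow_add, hcard, Real.sqrt_eq_rpow, ← Real.rpow_neg hs0.le, ← Real.rpow_natCast,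
        ← Real.rpow_mul hs0.le]
      congr 1; ring
    rw [h2, h3, mul_pow]; ring
  rw [e3]; ring

lemma radial_const {ι : Type*} [Fintype ι] [Nonempty ι] (k : ℕ) :
    ∫⁻ y : ι → ℝ, ENNReal.ofReal (Real.sqrt (y ⬝ᵥ y) ^ k * Real.exp (-Real.pi * (y ⬝ᵥ y))) =
      ENNReal.ofReal (Real.pi ^ (-(k : ℝ) / 2) *
        (Real.Gamma (((Fintype.card ι : ℝ) + k) / 2) / Real.Gamma ((Fintype.card ι : ℝ) / 2))) := by
  have hm : 0 < Fintype.card ι := Fintype.card_pos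
  set m := Fintype.card ι with hmdef
  have hmR : (0 : ℝ) < m := by exact_mod_cast hm
  have hG1 : 0 < Real.Gamma (((m : ℝ) + k) / 2) := Real.Gamma_pos_of_pos (by positivity)
  have hG2 : 0 < Real.Gamma ((m : ℝ) / 2) := Real.Gamma_pos_of_pos (by positivity)
  have hval : ∫ y : ι → ℝ, Real.sqrt (y ⬝ᵥ y) ^ k * Real.exp (-Real.pi * (y ⬝ᵥ y)) =
      Real.pi ^ (-(k : ℝ) / 2) * (Real.Gamma (((m : ℝ) + k) / 2) / Real.Gamma ((m : ℝ) / 2)) := by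
    have h1 : ∫ x : EuclideanSpace ℝ ι, ‖x‖ ^ k * Real.exp (-Real.pi * ‖x‖ ^ 2) =
        ∫ y : ι → ℝ, Real.sqrt (y ⬝ᵥ y) ^ k * Real.exp (-Real.pi * (y ⬝ᵥ y)) := by
      rw [← (EuclideanSpace.volume_preserving_symm_measurableEquiv_toLp ι).symm.integral_comp
        (MeasurableEquiv.measurableEmbedding _)]
      refine integral_congr_ae (Eventually.of_forall fun y => ?_)
      have : ‖(MeasurableEquiv.toLp 2 (ι → ℝ)).symm.symm y‖ = Real.sqrt (y ⬝ᵥ y) := by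
        rw [EuclideanSpace.norm_eq]
        congr 1
        refine Finset.sum_congr rfl fun i _ => ?_
        simp [sq]
      simp only [this, Real.sq_sqrt (dot_self_nonneg y)]
    rw [← h1, integral_fun_norm_addHaar volume (fun r => r ^ k * Real.exp (-Real.pi * r ^ 2))]
    rw [Measure.real, EuclideanSpace.volume_ball, finrank_euclideanSpace, ← hmdef]
    have h2 : ∫ r in Set.Ioi (0:ℝ), r ^ (m - 1) • (r ^ k * Real.exp (-Real.pi * r ^ 2)) =
        ∫ r in Set.Ioi (0:ℝ), r ^ ((m : ℝ) + k - 1) * Real.exp (-Real.pi * r ^ (2:ℝ)) := by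
      refine setIntegral_congr_fun measurableSet_Ioi fun r hr => ?_
      simp only [smul_eq_mul]
      rw [← mul_assoc, ← pow_add, Real.rpow_two, ← Real.rpow_natCast]
      congr 2
      rw [Nat.cast_add, Nat.cast_sub hm]; push_cast; ring
    rw [h2, integral_rpow_mul_exp_neg_mul_rpow two_pos (by linarith [(Nat.cast_nonneg k : (0:ℝ) ≤ k)])
      Real.pi_pos, Real.Gamma_add_one (by positivity)]
    simp only [ENNReal.ofReal_one, one_pow, one_mul, nsmul_eq_mul, smul_eq_mul]
    rw [ENNReal.toReal_ofReal (by positivity), Real.sqrt_eq_rpow, ← Real.rpow_natCast,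
      ← Real.rpow_mul Real.pi_pos.le]
    have h3 : Real.pi ^ (-(k : ℝ) / 2) = Real.pi ^ ((1 / 2 : ℝ) * m) *
        Real.pi ^ (-((m : ℝ) + k - 1 + 1) / 2) := by
      rw [← Real.rpow_add Real.pi_pos]; congr 1; ring
    rw [h3, show (m : ℝ) + k - 1 + 1 = m + k by ring]
    field_simp
  have hpos : 0 < Real.pi ^ (-(k : ℝ) / 2) *
      (Real.Gamma (((m : ℝ) + k) / 2) / Real.Gamma ((m : ℝ) / 2)) := by
    have := Real.pi_pos; positivity
  rw [← hval, ofReal_integral_eq_lintegral_ofReal]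
  · by_contra hn
    rw [integral_undef hn] at hval; linarith
  · exact Eventually.of_forall fun x => by positivity

lemma exists_diag {d : ℕ} (A : Matrix (Fin d) (Fin d) ℝ) (lam : Fin d → ℝ)
    (hlam : ∃ (hH : (A * Aᵀ).IsHermitian) (σ : Equiv.Perm (Fin d)),
      ∀ i, lam i = hH.eigenvalues (σ i)) :
    (∀ i, 0 ≤ lam i) ∧ ∃ D : Matrix (Fin d) (Fin d) ℝ, D * Dᵀ = 1 ∧
      ∀ x, (A *ᵥ x) ⬝ᵥ (A *ᵥ x) = ∑ i, lam i * (D *ᵥ x) i ^ 2 := by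
  obtain ⟨hH, σ, hσ⟩ := hlam
  have hP : (A * Aᵀ).PosSemidef := by
    have := Matrix.posSemidef_self_mul_conjTranspose A
    rwa [conjTranspose_eq_transpose_of_trivial] at this
  refine ⟨fun i => by rw [hσ]; exact hP.eigenvalues_nonneg _, ?_⟩
  have hB : (Aᵀ * A).IsHermitian := by
    have := Matrix.isHermitian_conjTranspose_mul_self A
    rwa [conjTranspose_eq_transpose_of_trivial] at this
  have hev : hH.eigenvalues = hB.eigenvalues :=
    (hH.eigenvalues_eq_eigenvalues_iff hB).mpr (Matrix.charpoly_mul_comm _ _)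
  have hsp := hB.spectral_theorem
  set V : Matrix (Fin d) (Fin d) ℝ := (hB.eigenvectorUnitary : Matrix (Fin d) (Fin d) ℝ) with hV
  have hVV : Vᵀ * V = 1 := by
    have := Unitary.coe_star_mul_self hB.eigenvectorUnitary
    rwa [Matrix.star_eq_conjTranspose, conjTranspose_eq_transpose_of_trivial] at this
  have hsp' : Aᵀ * A = V * diagonal hB.eigenvalues * Vᵀ := by
    refine hsp.trans ?_
    rw [Unitary.conjStarAlgAut_apply, Matrix.star_eq_conjTranspose,
      conjTranspose_eq_transpose_of_trivial]
    rfl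
  clear_value V
  generalize hB.eigenvalues = ev at hev hsp'
  refine ⟨Vᵀ.submatrix σ id, ?_, ?_⟩
  · have : Vᵀ.submatrix σ id * (Vᵀ.submatrix σ id)ᵀ = (Vᵀ * V).submatrix σ σ := rfl
    rw [this, hVV]; simp
  · intro x
    have h1 : ∀ i, (Vᵀ.submatrix σ id *ᵥ x) i = (Vᵀ *ᵥ x) (σ i) := fun i => rfl
    simp_rw [h1, hσ, hev]
    rw [Equiv.sum_comp σ (fun i => ev i * (Vᵀ *ᵥ x) i ^ 2)]
    rw [dotProduct_mulVec, ← mulVec_transpose, mulVec_mulVec, hsp', ← mulVec_mulVec,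
      ← mulVec_mulVec, dotProduct_comm, dotProduct_mulVec, ← mulVec_transpose]
    simp only [dotProduct, mulVec_diagonal]
    refine Finset.sum_congr rfl fun i _ => by ring

lemma prob_formula
    {Ω : Type*} [MeasurableSpace Ω] (P : Measure Ω) [IsProbabilityMeasure P]
    (d : ℕ) (hd : 2 ≤ d)
    (A : Matrix (Fin d) (Fin d) ℝ)
    (R : Ω → ℝ) (U : Ω → Fin d → ℝ)
    (hRmeas : Measurable R) (hRpos : ∀ ω, 0 < R ω)
    (hU : IsUniformOnSphere P U)
    (hInd : IndepFun R U P)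
    (X : Ω → Fin d → ℝ) (hX : ∀ ω, X ω = A.mulVec (R ω • U ω))
    (F : ℝ → ℝ) (hF : ∀ u, F u = (P {ω | R ω ≤ u}).toReal)
    (lam : Fin d → ℝ) (l0 : ℝ)
    (hlam : ∃ (hH : (A * Aᵀ).IsHermitian) (σ : Equiv.Perm (Fin d)),
      ∀ i, lam i = hH.eigenvalues (σ i))
    (hl0 : 0 < l0) (p : Fin d → Prop) [DecidablePred p] (hp : ∃ i, p i)
    (hpl : ∀ i, p i → lam i = l0) (u : ℝ) (hu : 0 < u) :
    (P {ω | eNorm (X ω) > u * Real.sqrt l0}).toReal =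
      Real.pi ^ (-(Fintype.card {i // ¬ p i} : ℝ) / 2) *
        (Real.Gamma ((d : ℝ) / 2) / Real.Gamma ((Fintype.card {i // p i} : ℝ) / 2)) *
      ∫ w : {i // ¬ p i} → ℝ,
        (1 - F (u / Real.sqrt ((1 + ∑ j : {i // ¬ p i}, lam j / l0 * w j ^ 2) / (1 + w ⬝ᵥ w)))) *
        (1 + w ⬝ᵥ w) ^ (-(d : ℝ) / 2) := by
  obtain ⟨hlnn, D, hD, hDx⟩ := exists_diag A lam hlam
  obtain ⟨hUm, hUs, hUi⟩ := hU
  set V : Ω → Fin d → ℝ := fun ω => D *ᵥ U ω with hV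
  have hVm : Measurable V := (measurable_mulVec' D).comp hUm
  have hVR : IndepFun R V P := hInd.comp measurable_id (measurable_mulVec' D)
  have hVlaw : P.map V = (gam d).map nrmz := by
    rw [hV, hUi D hD]
    have : IsProbabilityMeasure (P.map U) := Measure.isProbabilityMeasure_map hUm.aemeasurable
    apply nu_eq hd
    · have hms : MeasurableSet {x : Fin d → ℝ | x ⬝ᵥ x = 1} :=
        (continuous_dot_self (ι := Fin d)).measurable (measurableSet_singleton 1)
      rw [ae_map_iff hUm.aemeasurable hms]
      refine Eventually.of_forall fun ω => ?_
      have h := hUs ω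
      rw [eNorm, Real.sqrt_eq_one] at h
      rw [← h, dotProduct]
      exact Finset.sum_congr rfl fun i _ => by ring
    · intro D' hD'
      rw [Measure.map_map (measurable_mulVec' D') hUm]
      exact hUi D' hD'
  set f : ℝ → ENNReal := fun q => P {ω | u ^ 2 < R ω ^ 2 * q} with hf
  have hfmono : Monotone f := by
    intro q q' hq
    apply measure_mono
    intro ω hω
    simp only [Set.mem_ofPred_eq] at hω ⊢
    exact hω.trans_le (mul_le_mul_of_nonneg_left hq (sq_nonneg _))
  have hset : {ω | eNorm (X ω) > u * Real.sqrt l0} =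
      (fun ω => (R ω, V ω)) ⁻¹' {q : ℝ × (Fin d → ℝ) |
        u ^ 2 < q.1 ^ 2 * ∑ i, lam i / l0 * q.2 i ^ 2} := by
    ext ω
    simp only [Set.mem_ofPred_eq, Set.mem_preimage, gt_iff_lt]
    have e1 : eNorm (X ω) = Real.sqrt (R ω ^ 2 * ∑ i, lam i * V ω i ^ 2) := by
      rw [eNorm, hX, mulVec_smul]
      congr 1
      rw [← hDx (U ω), dotProduct, Finset.mul_sum]
      exact Finset.sum_congr rfl fun i _ => by simp only [Pi.smul_apply, smul_eq_mul]; ring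
    have e2 : ∑ i, lam i * V ω i ^ 2 = l0 * ∑ i, lam i / l0 * V ω i ^ 2 := by
      rw [Finset.mul_sum]
      exact Finset.sum_congr rfl fun i _ => by field_simp
    rw [e1, Real.lt_sqrt (by positivity), mul_pow, Real.sq_sqrt hl0.le, e2,
      show R ω ^ 2 * (l0 * ∑ i, lam i / l0 * V ω i ^ 2) =
        (R ω ^ 2 * ∑ i, lam i / l0 * V ω i ^ 2) * l0 by ring]
    exact mul_lt_mul_iff_of_pos_right hl0
  have hmeasS : MeasurableSet {q : ℝ × (Fin d → ℝ) |
        u ^ 2 < q.1 ^ 2 * ∑ i, lam i / l0 * q.2 i ^ 2} := by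
    apply measurableSet_lt <;> fun_prop
  have hprob : P {ω | eNorm (X ω) > u * Real.sqrt l0} =
      ∫⁻ x, f (∑ i, lam i / l0 * x i ^ 2) ∂((gam d).map nrmz) := by
    rw [hset, ← Measure.map_apply (hRmeas.prodMk hVm) hmeasS,
      (indepFun_iff_map_prod_eq_prod_map_map hRmeas.aemeasurable hVm.aemeasurable).mp hVR]
    have : IsProbabilityMeasure (P.map V) := Measure.isProbabilityMeasure_map hVm.aemeasurable
    have : IsProbabilityMeasure (P.map R) := Measure.isProbabilityMeasure_map hRmeas.aemeasurable
    rw [Measure.prod_apply_symm hmeasS, hVlaw]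
    refine lintegral_congr fun x => ?_
    rw [Measure.map_apply hRmeas (measurable_prodMk_right hmeasS)]
    rfl
  rw [hprob, sphere_formula p hp (fun i => lam i / l0)
    (fun i hi => by rw [hpl i hi, div_self hl0.ne']) f hfmono.measurable]
  obtain ⟨i0, hi0⟩ := hp
  have : Nonempty {i // p i} := ⟨⟨i0, hi0⟩⟩
  have hcard : Fintype.card {i // p i} + Fintype.card {i // ¬ p i} = d := by
    have := Fintype.card_subtype_compl p
    have h2 := Fintype.card_subtype_le p
    rw [this]; simp at h2 ⊢; omega
  have hcardR : (Fintype.card {i // p i} : ℝ) + Fintype.card {i // ¬ p i} = d := by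
    exact_mod_cast hcard
  have hGpos : (0:ℝ) < Fintype.card {i // p i} := by exact_mod_cast Fintype.card_pos
  have hG1 : 0 < Real.Gamma ((d : ℝ) / 2) := Real.Gamma_pos_of_pos (by
    have : (2:ℝ) ≤ d := by exact_mod_cast hd
    linarith)
  have hG2 : 0 < Real.Gamma ((Fintype.card {i // p i} : ℝ) / 2) :=
    Real.Gamma_pos_of_pos (by linarith)
  rw [radial_const, ENNReal.toReal_mul, hcardR, ENNReal.toReal_ofReal
    (by have := Real.pi_pos; positivity)]
  congr 1
  have hqpos : ∀ w : {i // ¬ p i} → ℝ,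
      0 < (1 + ∑ j : {i // ¬ p i}, lam j / l0 * w j ^ 2) / (1 + w ⬝ᵥ w) := by
    intro w
    have h1 := dot_self_nonneg w
    have h2 : 0 ≤ ∑ j : {i // ¬ p i}, lam j / l0 * w j ^ 2 :=
      Finset.sum_nonneg fun j _ => mul_nonneg (div_nonneg (hlnn _) hl0.le) (sq_nonneg _)
    positivity
  have hfval : ∀ q, 0 < q → f q = ENNReal.ofReal (1 - F (u / Real.sqrt q)) := by
    intro q hq
    have hs := Real.sqrt_pos.mpr hq
    have h1 : {ω | u ^ 2 < R ω ^ 2 * q} = {ω | R ω ≤ u / Real.sqrt q}ᶜ := by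
      ext ω
      simp only [Set.mem_ofPred_eq, Set.mem_compl_iff, not_le]
      rw [div_lt_iff₀ hs, ← sq_lt_sq₀ hu.le (mul_pos (hRpos ω) hs).le, mul_pow, Real.sq_sqrt hq.le]
    have hms : MeasurableSet {ω | R ω ≤ u / Real.sqrt q} := hRmeas measurableSet_Iic
    rw [hf]
    simp only
    rw [h1, hF, ← ENNReal.ofReal_toReal (measure_ne_top P _)]
    congr 1
    exact probReal_compl_eq_one_sub hms
  have hFle : ∀ v, 0 ≤ 1 - F v := fun v => by
    rw [hF]
    have : P.real {ω | R ω ≤ v} ≤ 1 := measureReal_le_one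
    rw [Measure.real] at this; linarith
  have hFmono : Monotone F := by
    intro a b hab
    rw [hF, hF]
    exact ENNReal.toReal_mono (measure_ne_top _ _) (measure_mono fun ω hω => le_trans hω hab)
  rw [integral_eq_lintegral_of_nonneg_ae]
  · congr 1
    refine lintegral_congr fun w => ?_
    rw [hfval _ (hqpos w), ENNReal.ofReal_mul (hFle _)]
  · refine Eventually.of_forall fun w => mul_nonneg (hFle _) (Real.rpow_nonneg ?_ _)
    have := dot_self_nonneg w; linarith
  · apply Measurable.aestronglyMeasurable
    have h1 := hFmono.measurable
    have h2 : Measurable fun x : {i // ¬ p i} → ℝ => x ⬝ᵥ x := continuous_dot_self.measurable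
    fun_prop

lemma one_add_rpow_le_exp (M b : ℝ) (hb : 0 < b) :
    ∃ C : ℝ, 0 < C ∧ ∀ x : ℝ, 0 ≤ x → (1 + x) ^ M ≤ C * Real.exp (b * x) := by
  set M' := |M| + 1 with hM'
  have hM'pos : 0 < M' := by positivity
  set κ := b / M' with hκ
  have hκpos : 0 < κ := by positivity
  refine ⟨κ⁻¹ ^ M' * Real.exp (M' * (κ - 1)), by positivity, fun x hx => ?_⟩
  have h1 : (1 + x) ^ M ≤ (1 + x) ^ M' :=
    Real.rpow_le_rpow_of_exponent_le (by linarith) (by linarith [le_abs_self M])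
  have h2 : 1 + x ≤ κ⁻¹ * Real.exp (κ * x + κ - 1) := by
    have := Real.add_one_le_exp (κ * x + κ - 1)
    rw [inv_mul_eq_div, le_div_iff₀ hκpos]; linarith
  have h3 : (1 + x) ^ M' ≤ (κ⁻¹ * Real.exp (κ * x + κ - 1)) ^ M' :=
    Real.rpow_le_rpow (by linarith) h2 hM'pos.le
  refine h1.trans (h3.trans (le_of_eq ?_))
  rw [Real.mul_rpow (by positivity) (Real.exp_pos _).le, ← Real.exp_mul, mul_assoc, ← Real.exp_add]
  congr 2
  have : κ * M' = b := by rw [hκ]; field_simp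
  rw [← this]; ring

/-- factorisation of the ratio -/
lemma ratio_split (G : ℝ → ℝ) (c δ τ N u t : ℝ) (hc : 0 < c) (hu : 0 < u) (ht : 0 < t) :
    G (u * t) / (c * u ^ N * Real.exp (-δ * u ^ τ)) =
      G (u * t) / (c * (u * t) ^ N * Real.exp (-δ * (u * t) ^ τ)) *
        (t ^ N * Real.exp (-δ * (u ^ τ * (t ^ τ - 1)))) := by
  have hE : Real.exp (-δ * (u ^ τ * t ^ τ)) =
      Real.exp (-δ * u ^ τ) * Real.exp (-δ * (u ^ τ * (t ^ τ - 1))) := by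
    rw [← Real.exp_add]; congr 1; ring
  rw [Real.mul_rpow hu.le ht.le, Real.mul_rpow hu.le ht.le, hE]
  have h1 := Real.rpow_pos_of_pos hu N
  have h2 := Real.rpow_pos_of_pos ht N
  have h3 := Real.exp_pos (-δ * u ^ τ)
  have h4 := Real.exp_pos (-δ * (u ^ τ * (t ^ τ - 1)))
  generalize Real.exp (-δ * u ^ τ) = e1 at *
  generalize Real.exp (-δ * (u ^ τ * (t ^ τ - 1))) = e2 at *
  field_simp

lemma inv_sqrt_rpow (q τ : ℝ) (hq : 0 < q) : ((Real.sqrt q)⁻¹) ^ τ = q ^ (-(τ / 2)) := by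
  rw [Real.sqrt_eq_rpow, ← Real.rpow_neg hq.le, ← Real.rpow_mul hq.le]
  congr 1; ring

lemma pointwise_limit (G : ℝ → ℝ) (c δ τ N D : ℝ) (hc : 0 < c) (hτ : 0 < τ)
    (hG : Tendsto (fun u : ℝ => G u / (c * u ^ N * Real.exp (-δ * u ^ τ))) atTop (𝓝 1))
    (A B : ℝ) (hA : 0 ≤ A) (hB : 0 ≤ B) :
    Tendsto (fun u : ℝ => G (u / Real.sqrt ((1 + u ^ (-τ) * A) / (1 + u ^ (-τ) * B))) /
      (c * u ^ N * Real.exp (-δ * u ^ τ)) * (1 + u ^ (-τ) * B) ^ (-D / 2)) atTop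
      (𝓝 (Real.exp (-(δ * τ / 2 * (B - A))))) := by
  have hs : Tendsto (fun u : ℝ => u ^ (-τ)) atTop (𝓝 0) := tendsto_rpow_neg_atTop hτ
  have hnum : Tendsto (fun u : ℝ => 1 + u ^ (-τ) * A) atTop (𝓝 1) := by
    simpa using (hs.mul_const A).const_add 1
  have hden : Tendsto (fun u : ℝ => 1 + u ^ (-τ) * B) atTop (𝓝 1) := by
    simpa using (hs.mul_const B).const_add 1
  set q : ℝ → ℝ := fun u => (1 + u ^ (-τ) * A) / (1 + u ^ (-τ) * B) with hq
  have hqt : Tendsto q atTop (𝓝 1) := by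
    have h := hnum.div hden one_ne_zero
    rw [div_one] at h
    exact h
  have hqpos : ∀ u, 0 < u → 0 < q u := fun u hu => by
    have := Real.rpow_pos_of_pos hu (-τ)
    simp only [hq]; positivity
  have ht : Tendsto (fun u => (Real.sqrt (q u))⁻¹) atTop (𝓝 1) := by
    have : Tendsto (fun u => (Real.sqrt (q u))) atTop (𝓝 1) := by
      simpa using hqt.sqrt
    simpa using this.inv₀ one_ne_zero
  have hv : Tendsto (fun u => u * (Real.sqrt (q u))⁻¹) atTop atTop :=
    tendsto_id.atTop_mul_pos one_pos ht
  have hder : HasDerivAt (fun s : ℝ => ((1 + s * A) / (1 + s * B)) ^ (-(τ / 2)))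
      (τ / 2 * (B - A)) 0 := by
    have h1 : HasDerivAt (fun s : ℝ => 1 + s * A) A 0 := by
      simpa using ((hasDerivAt_id (0:ℝ)).mul_const A).const_add 1
    have h2 : HasDerivAt (fun s : ℝ => 1 + s * B) B 0 := by
      simpa using ((hasDerivAt_id (0:ℝ)).mul_const B).const_add 1
    have h12 : HasDerivAt (fun s : ℝ => (1 + s * A) / (1 + s * B))
        ((A * (1 + 0 * B) - (1 + 0 * A) * B) / (1 + 0 * B) ^ 2) 0 := h1.div h2 (by simp)
    have h3 := h12.rpow_const (p := -(τ / 2)) (Or.inl (by simp))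
    convert h3 using 1
    simp only [zero_mul, add_zero, div_one, one_pow, Real.one_rpow]
    ring
  have hsl : Tendsto (fun u : ℝ => u ^ τ * (((Real.sqrt (q u))⁻¹) ^ τ - 1)) atTop
      (𝓝 (τ / 2 * (B - A))) := by
    have hs' : Tendsto (fun u : ℝ => u ^ (-τ)) atTop (𝓝[≠] 0) := by
      refine tendsto_nhdsWithin_iff.mpr ⟨hs, ?_⟩
      filter_upwards [eventually_gt_atTop 0] with u hu
      exact (Real.rpow_pos_of_pos hu _).ne'
    refine (hder.tendsto_slope_zero.comp hs').congr' ?_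
    filter_upwards [eventually_gt_atTop 0] with u hu
    simp only [Function.comp, zero_add, zero_mul, add_zero, div_one, Real.one_rpow, smul_eq_mul]
    rw [inv_sqrt_rpow _ _ (hqpos u hu), Real.rpow_neg hu.le, inv_inv, hq]
    simp only [Real.rpow_neg hu.le]
  have hlim := (((hG.comp hv).mul ((ht.rpow_const (p := N) (Or.inl one_ne_zero)).mul
    (Real.continuous_exp.continuousAt.tendsto.comp (hsl.const_mul (-δ))))).mul
      (hden.rpow_const (p := -D / 2) (Or.inl one_ne_zero)))
  simp only [Real.one_rpow, one_mul, mul_one] at hlim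
  rw [show -(δ * τ / 2 * (B - A)) = -δ * (τ / 2 * (B - A)) by ring]
  refine hlim.congr' ?_
  filter_upwards [eventually_gt_atTop 0] with u hu
  simp only [Function.comp]
  rw [div_eq_mul_inv u, ratio_split G c δ τ N u _ hc hu (inv_pos.mpr (Real.sqrt_pos.mpr (hqpos u hu)))]

lemma uniform_bound (G : ℝ → ℝ) (c δ τ N D η : ℝ) (hc : 0 < c) (hδ : 0 < δ) (hτ : 0 < τ)
    (hη : 0 < η) (hD : 0 ≤ D) (hG0 : ∀ v, 0 ≤ G v)
    (hG : Tendsto (fun u : ℝ => G u / (c * u ^ N * Real.exp (-δ * u ^ τ))) atTop (𝓝 1)) :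
    ∃ C u0 : ℝ, ∀ u, u0 ≤ u → ∀ A B : ℝ, 0 ≤ A → A ≤ B → η * B ≤ B - A →
      ‖G (u / Real.sqrt ((1 + u ^ (-τ) * A) / (1 + u ^ (-τ) * B))) /
      (c * u ^ N * Real.exp (-δ * u ^ τ)) * (1 + u ^ (-τ) * B) ^ (-D / 2)‖ ≤
        C * (1 + B) ^ (-D / 2) := by
  obtain ⟨C1, hC1, hC1b⟩ := one_add_rpow_le_exp (N / τ) (δ / 2) (by positivity)
  obtain ⟨C2, hC2, hC2b⟩ := one_add_rpow_le_exp (D / 2) (δ * τ * η / 4) (by positivity)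
  obtain ⟨v0, hv0⟩ := eventually_atTop.mp (hG.eventually (eventually_le_nhds (one_lt_two)))
  refine ⟨2 * C1 * C2, max v0 1, fun u hu A B hA hAB hη' => ?_⟩
  have hu1 : 1 ≤ u := (le_max_right _ _).trans hu
  have huv : v0 ≤ u := (le_max_left _ _).trans hu
  have hupos : 0 < u := by linarith
  have hB : 0 ≤ B := hA.trans hAB
  set s := u ^ (-τ) with hs
  have hspos : 0 < s := Real.rpow_pos_of_pos hupos _
  have hus : u ^ τ * s = 1 := by
    rw [hs, ← Real.rpow_add hupos]; simp
  have huτ : 1 ≤ u ^ τ := Real.one_le_rpow hu1 hτ.le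
  have hden : 0 < 1 + s * B := by positivity
  set q := (1 + s * A) / (1 + s * B) with hq
  have hqpos : 0 < q := by positivity
  have hq1 : q ≤ 1 := by
    rw [hq, div_le_one hden]; nlinarith
  set t := (Real.sqrt q)⁻¹ with ht
  have htpos : 0 < t := inv_pos.mpr (Real.sqrt_pos.mpr hqpos)
  have ht1 : 1 ≤ t := (one_le_inv₀ (Real.sqrt_pos.mpr hqpos)).mpr (Real.sqrt_le_one.mpr hq1)
  set x := t ^ τ - 1 with hx
  have hx0 : 0 ≤ x := by
    have := Real.one_le_rpow ht1 hτ.le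
    linarith
  set y := B / (1 + s * B) with hy
  have hy0 : 0 ≤ y := by positivity
  have htN : t ^ N = (1 + x) ^ (N / τ) := by
    rw [hx, show 1 + (t ^ τ - 1) = t ^ τ by ring, ← Real.rpow_mul htpos.le]
    congr 1; field_simp
  have hxq : τ / 2 * (1 - q) ≤ x := by
    rw [hx, ht, inv_sqrt_rpow q τ hqpos, Real.rpow_def_of_pos hqpos]
    have h1 := Real.add_one_le_exp (Real.log q * -(τ / 2))
    have h2 := Real.log_le_sub_one_of_pos hqpos
    nlinarith
  have h1q : u ^ τ * (1 - q) = (B - A) / (1 + s * B) := by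
    have : 1 - q = s * (B - A) / (1 + s * B) := by rw [hq]; field_simp; ring
    rw [this, ← mul_div_assoc, ← mul_assoc, hus, one_mul]
  have hyq : η * y ≤ u ^ τ * (1 - q) := by
    rw [h1q, hy, ← mul_div_assoc]
    exact div_le_div_of_nonneg_right hη' hden.le
  have hyx : τ / 2 * (η * y) ≤ u ^ τ * x := by
    calc τ / 2 * (η * y) ≤ τ / 2 * (u ^ τ * (1 - q)) := by gcongr
      _ = u ^ τ * (τ / 2 * (1 - q)) := by ring
      _ ≤ u ^ τ * x := by gcongr
  have hvu : v0 ≤ u * t := huv.trans (le_mul_of_one_le_right hupos.le ht1)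
  have hR2 := hv0 _ hvu
  have hR0 : 0 ≤ G (u * t) / (c * (u * t) ^ N * Real.exp (-δ * (u * t) ^ τ)) :=
    div_nonneg (hG0 _) (by positivity)
  have hmid : t ^ N * Real.exp (-δ * (u ^ τ * x)) ≤ C1 * Real.exp (-(δ * τ * η / 4 * y)) := by
    rw [htN]
    calc (1 + x) ^ (N / τ) * Real.exp (-δ * (u ^ τ * x))
        ≤ C1 * Real.exp (δ / 2 * x) * Real.exp (-δ * (u ^ τ * x)) := by
          gcongr; exact hC1b x hx0
      _ = C1 * Real.exp (δ / 2 * x + -δ * (u ^ τ * x)) := by rw [mul_assoc, ← Real.exp_add]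
      _ ≤ C1 * Real.exp (-(δ * τ * η / 4 * y)) := by
          gcongr
          have : x ≤ u ^ τ * x := le_mul_of_one_le_left hx0 huτ
          nlinarith
  have hexp : Real.exp (-(δ * τ * η / 4 * y)) ≤ C2 * (1 + y) ^ (-D / 2) := by
    rw [Real.exp_neg, neg_div, Real.rpow_neg (by positivity), ← div_eq_mul_inv, inv_eq_one_div,
      div_le_div_iff₀ (Real.exp_pos _) (by positivity), one_mul]
    exact hC2b y hy0
  have hfin : (1 + y) ^ (-D / 2) * (1 + s * B) ^ (-D / 2) ≤ (1 + B) ^ (-D / 2) := by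
    rw [← Real.mul_rpow (by positivity) hden.le]
    apply Real.rpow_le_rpow_of_nonpos (by positivity) _ (by linarith)
    have : (1 + y) * (1 + s * B) = 1 + s * B + B := by rw [hy]; field_simp
    rw [this]; nlinarith
  rw [div_eq_mul_inv u, ← ht, ratio_split G c δ τ N u t hc hupos htpos, ← hx, Real.norm_of_nonneg
    (by positivity)]
  calc _ ≤ 2 * (C1 * (C2 * (1 + y) ^ (-D / 2))) * (1 + s * B) ^ (-D / 2) := by
        refine mul_le_mul_of_nonneg_right (mul_le_mul hR2 ?_ (by positivity) (by norm_num))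
          (by positivity)
        exact hmid.trans (mul_le_mul_of_nonneg_left hexp hC1.le)
    _ = 2 * C1 * C2 * ((1 + y) ^ (-D / 2) * (1 + s * B) ^ (-D / 2)) := by ring
    _ ≤ _ := by gcongr

lemma integral_limit {J : Type*} [Fintype J] (G : ℝ → ℝ) (hGm : Measurable G) (c δ τ N D : ℝ)
    (hc : 0 < c) (hδ : 0 < δ) (hτ : 0 < τ) (hG0 : ∀ v, 0 ≤ G v)
    (hD : (Fintype.card J : ℝ) < D)
    (hG : Tendsto (fun u : ℝ => G u / (c * u ^ N * Real.exp (-δ * u ^ τ))) atTop (𝓝 1))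
    (a : J → ℝ) (ha0 : ∀ j, 0 ≤ a j) (ha1 : ∀ j, a j < 1) :
    Tendsto (fun u : ℝ => (∫ w : J → ℝ,
        G (u / Real.sqrt ((1 + ∑ j, a j * w j ^ 2) / (1 + w ⬝ᵥ w))) * (1 + w ⬝ᵥ w) ^ (-D / 2)) /
        (c * u ^ N * Real.exp (-δ * u ^ τ) * u ^ (-(τ / 2) * (Fintype.card J : ℝ)))) atTop
      (𝓝 (∏ j, Real.sqrt (Real.pi / (δ * τ / 2 * (1 - a j))))) := by
  rw [← integral_gauss_pi]
  have hD0 : 0 ≤ D := le_trans (Nat.cast_nonneg _) hD.le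
  obtain ⟨η, hη, hηa⟩ : ∃ η : ℝ, 0 < η ∧ ∀ j, η ≤ 1 - a j := by
    rcases isEmpty_or_nonempty J with h | h
    · exact ⟨1, one_pos, fun j => (h.false j).elim⟩
    · obtain ⟨j0, hj0⟩ := Finite.exists_min (fun j => 1 - a j)
      exact ⟨1 - a j0, by linarith [ha1 j0], hj0⟩
  have hsum : ∀ w : J → ℝ, w ⬝ᵥ w - ∑ j, a j * w j ^ 2 = ∑ j, (1 - a j) * w j ^ 2 := by
    intro w
    rw [dotProduct, ← Finset.sum_sub_distrib]
    exact Finset.sum_congr rfl fun j _ => by ring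
  have hA0 : ∀ w : J → ℝ, 0 ≤ ∑ j, a j * w j ^ 2 := fun w =>
    Finset.sum_nonneg fun j _ => mul_nonneg (ha0 j) (sq_nonneg _)
  have hAη : ∀ w : J → ℝ, η * (w ⬝ᵥ w) ≤ w ⬝ᵥ w - ∑ j, a j * w j ^ 2 := fun w => by
    rw [hsum, dotProduct, Finset.mul_sum]
    refine Finset.sum_le_sum fun j _ => ?_
    rw [← sq]
    exact mul_le_mul_of_nonneg_right (hηa j) (sq_nonneg _)
  obtain ⟨C, u0, hbd⟩ := uniform_bound G c δ τ N D η hc hδ hτ hη hD0 hG0 hG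
  have hdw : Measurable fun x : J → ℝ => x ⬝ᵥ x := continuous_dot_self.measurable
  have key : Tendsto (fun u : ℝ => ∫ w : J → ℝ,
      G (u / Real.sqrt ((1 + u ^ (-τ) * ∑ j, a j * w j ^ 2) / (1 + u ^ (-τ) * (w ⬝ᵥ w)))) /
      (c * u ^ N * Real.exp (-δ * u ^ τ)) * (1 + u ^ (-τ) * (w ⬝ᵥ w)) ^ (-D / 2)) atTop
      (𝓝 (∫ w : J → ℝ, Real.exp (-∑ j, δ * τ / 2 * (1 - a j) * w j ^ 2))) := by
    refine tendsto_integral_filter_of_dominated_convergence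
      (fun w => |C| * (1 + ‖w‖ ^ 2) ^ (-D / 2)) ?_ ?_ ?_ ?_
    · refine Eventually.of_forall fun u => ?_
      apply Measurable.aestronglyMeasurable
      fun_prop
    · filter_upwards [eventually_ge_atTop u0] with u hu
      refine Eventually.of_forall fun w => ?_
      have h0 := dot_self_nonneg w
      refine (hbd u hu _ _ (hA0 w) ?_ (hAη w)).trans ?_
      · have := hAη w
        nlinarith
      · have hB : ‖w‖ ^ 2 ≤ w ⬝ᵥ w := by
          have : ‖w‖ ≤ Real.sqrt (w ⬝ᵥ w) := by
            refine (pi_norm_le_iff_of_nonneg (Real.sqrt_nonneg _)).mpr fun j => ?_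
            apply Real.le_sqrt_of_sq_le
            rw [Real.norm_eq_abs, sq_abs, sq]
            exact Finset.single_le_sum (f := fun j => w j * w j)
              (fun j _ => mul_self_nonneg _) (Finset.mem_univ j)
          calc ‖w‖ ^ 2 ≤ Real.sqrt (w ⬝ᵥ w) ^ 2 := by gcongr
            _ = _ := Real.sq_sqrt h0
        have h1 : (1 + w ⬝ᵥ w) ^ (-D / 2) ≤ (1 + ‖w‖ ^ 2) ^ (-D / 2) :=
          Real.rpow_le_rpow_of_nonpos (by positivity) (by linarith) (by linarith)
        have h2 : 0 ≤ (1 + w ⬝ᵥ w) ^ (-D / 2) := by positivity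
        exact mul_le_mul (le_abs_self C) h1 h2 (abs_nonneg _)
    · exact (integrable_rpow_neg_one_add_norm_sq (by simpa using hD)).const_mul _
    · refine Eventually.of_forall fun w => ?_
      have := pointwise_limit G c δ τ N D hc hτ hG _ _ (hA0 w) (dot_self_nonneg w)
      rw [hsum, Finset.mul_sum] at this
      simp_rw [← mul_assoc] at this
      exact this
  refine key.congr' ?_
  filter_upwards [eventually_gt_atTop 0] with u hu
  set ε := u ^ (-(τ / 2)) with hε
  have hεpos : 0 < ε := Real.rpow_pos_of_pos hu _
  have hε2 : u ^ (-τ) = ε ^ 2 := by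
    rw [hε, ← Real.rpow_natCast, ← Real.rpow_mul hu.le]; congr 1; push_cast; ring
  have hεk : u ^ (-(τ / 2) * (Fintype.card J : ℝ)) = ε ^ Fintype.card J := by
    rw [Real.rpow_mul hu.le, Real.rpow_natCast]
  have hsc := Measure.integral_comp_smul (volume : Measure (J → ℝ)) (fun w : J → ℝ =>
    G (u / Real.sqrt ((1 + ∑ j, a j * w j ^ 2) / (1 + w ⬝ᵥ w))) * (1 + w ⬝ᵥ w) ^ (-D / 2)) ε
  rw [Module.finrank_fintype_fun_eq_card, abs_of_pos (by positivity), smul_eq_mul] at hsc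
  have hK : 0 < c * u ^ N * Real.exp (-δ * u ^ τ) := by positivity
  rw [hεk, div_mul_eq_div_div_swap, div_eq_inv_mul _ (ε ^ _), ← hsc, ← integral_div]
  refine integral_congr_ae (Eventually.of_forall fun w => ?_)
  have h1 : (ε • w) ⬝ᵥ (ε • w) = u ^ (-τ) * (w ⬝ᵥ w) := by
    rw [hε2]; simp only [smul_dotProduct, dotProduct_smul, smul_eq_mul]; ring
  have h2 : ∑ j, a j * (ε • w) j ^ 2 = u ^ (-τ) * ∑ j, a j * w j ^ 2 := by
    rw [hε2, Finset.mul_sum]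
    exact Finset.sum_congr rfl fun j _ => by simp only [Pi.smul_apply, smul_eq_mul]; ring
  simp only [h1, h2]
  ring

/-- Tail asymptotics (14) for Kotz Type III elliptical random vectors. -/
theorem norm_kotz_iii_tail
    {Ω : Type*} [MeasurableSpace Ω] (P : Measure Ω) [IsProbabilityMeasure P]
    (d : ℕ) [NeZero d] (hd : 2 ≤ d)
    (A : Matrix (Fin d) (Fin d) ℝ)
    (R : Ω → ℝ) (U : Ω → Fin d → ℝ)
    (hRmeas : Measurable R) (hRpos : ∀ ω, 0 < R ω)
    (hU : IsUniformOnSphere P U)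
    (hInd : IndepFun R U P)
    (X : Ω → Fin d → ℝ) (hX : ∀ ω, X ω = A.mulVec (R ω • U ω))
    -- `F` is the distribution function of `R`
    (F : ℝ → ℝ) (hF : ∀ u, F u = (P {ω | R ω ≤ u}).toReal) (hF0 : F 0 = 0)
    -- `lam` enumerates the eigenvalues of `Σ = A Aᵀ` in decreasing order
    (lam : Fin d → ℝ) (hmono : Antitone lam)
    (hlam : ∃ (hH : (A * Aᵀ).IsHermitian) (σ : Equiv.Perm (Fin d)),
      ∀ i, lam i = hH.eigenvalues (σ i))
    (hlam0 : 0 < lam 0)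
    -- `m` is the multiplicity of the largest eigenvalue `lam 0 = λ_(m)`
    (m : ℕ) (hm : m = (Finset.univ.filter fun j => lam j = lam 0).card)
    (Cstar : ℝ)
    (hC : Cstar = ∏ j ∈ Finset.univ.filter (fun j => lam j ≠ lam 0),
      ((1 : ℝ) - lam j / lam 0) ^ (-(1 / 2 : ℝ)))
    -- Kotz Type III tail:  1 - F(u) = (1+o(1)) c u^N exp(-δ u^τ),  u → ∞
    (c δ τ N : ℝ) (hc : 0 < c) (hδ : 0 < δ) (hτ : 0 < τ)
    (hKotz : Tendsto (fun u : ℝ =>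
      (1 - F u) / (c * u ^ N * Real.exp (-δ * u ^ τ))) atTop (𝓝 1))
 :
    Tendsto (fun u =>
        (P {ω | eNorm (X ω) > u * Real.sqrt (lam 0)}).toReal /
          (c * Cstar * (Real.Gamma ((d : ℝ) / 2) / Real.Gamma ((m : ℝ) / 2)) *
            (2 / (δ * τ)) ^ (((d : ℝ) - (m : ℝ)) / 2) *
            u ^ (τ * ((m : ℝ) - (d : ℝ)) / 2 + N) * Real.exp (-δ * u ^ τ)))
      atTop (𝓝 1) := by
  set p : Fin d → Prop := fun j => lam j = lam 0 with hp
  set k := Fintype.card {j // ¬ p j} with hk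
  have hm' : Fintype.card {j // p j} = m := by
    rw [hm, Fintype.card_subtype]
  have hmk : m + k = d := by
    have := Fintype.card_subtype_compl p
    have h2 := Fintype.card_subtype_le p
    rw [hk, this, ← hm']; simp at h2 ⊢; omega
  have hmpos : 0 < m := by
    rw [← hm']
    have : Nonempty {j // p j} := ⟨⟨0, rfl⟩⟩
    exact Fintype.card_pos
  have hmkR : (m : ℝ) + k = d := by exact_mod_cast hmk
  have hkd : (k : ℝ) < d := by
    have : (0:ℝ) < m := by exact_mod_cast hmpos
    linarith
  have hlnn := (exists_diag A lam hlam).1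
  have hFmono : Monotone F := by
    intro a b hab
    rw [hF, hF]
    exact ENNReal.toReal_mono (measure_ne_top _ _) (measure_mono fun ω hω => le_trans hω hab)
  have hFle : ∀ v, 0 ≤ 1 - F v := fun v => by
    rw [hF]
    have : P.real {ω | R ω ≤ v} ≤ 1 := measureReal_le_one
    rw [Measure.real] at this; linarith
  have hlt : ∀ j : {j // ¬ p j}, lam j / lam 0 < 1 := fun j => by
    rw [div_lt_one hlam0]
    exact lt_of_le_of_ne (hmono (Fin.zero_le _)) j.2
  have hlim := integral_limit (J := {j // ¬ p j}) (fun v => 1 - F v)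
    (measurable_const.sub hFmono.measurable) c δ τ N d hc hδ hτ hFle hkd hKotz
    (fun j => lam j / lam 0) (fun j => div_nonneg (hlnn _) hlam0.le) hlt
  set L := ∏ j : {j // ¬ p j}, Real.sqrt (Real.pi / (δ * τ / 2 * (1 - lam j / lam 0))) with hL
  have hpi := Real.pi_pos
  have hG1 : 0 < Real.Gamma ((d : ℝ) / 2) := Real.Gamma_pos_of_pos (by
    have : (2:ℝ) ≤ d := by exact_mod_cast hd
    linarith)
  have hG2 : 0 < Real.Gamma ((m : ℝ) / 2) := Real.Gamma_pos_of_pos (by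
    have : (0:ℝ) < m := by exact_mod_cast hmpos
    linarith)
  -- the constants
  have hLval : L = Real.pi ^ ((k : ℝ) / 2) * (2 / (δ * τ)) ^ ((k : ℝ) / 2) * Cstar := by
    have h1 : ∀ j : {j // ¬ p j}, Real.sqrt (Real.pi / (δ * τ / 2 * (1 - lam j / lam 0))) =
        (Real.pi ^ (1 / 2 : ℝ) * (2 / (δ * τ)) ^ (1 / 2 : ℝ)) *
          (1 - lam j / lam 0) ^ (-(1 / 2 : ℝ)) := by
      intro j
      have hj : 0 < 1 - lam j / lam 0 := by linarith [hlt j]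
      rw [Real.rpow_neg hj.le, ← Real.inv_rpow hj.le, ← Real.mul_rpow hpi.le (by positivity),
        ← Real.mul_rpow (by positivity) (by positivity), Real.sqrt_eq_rpow]
      congr 1; field_simp
    have h2 : Cstar = ∏ j : {j // ¬ p j}, (1 - lam j / lam 0) ^ (-(1 / 2 : ℝ)) := by
      rw [hC]
      exact Finset.prod_subtype _ (by simp [hp]) _
    rw [hL, Finset.prod_congr rfl (fun j _ => h1 j), Finset.prod_mul_distrib, ← h2,
      Finset.prod_const, Finset.card_univ, ← hk, mul_pow, ← Real.rpow_natCast, ← Real.rpow_natCast,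
      ← Real.rpow_mul hpi.le, ← Real.rpow_mul (by positivity)]
    congr 3 <;> ring_nf
  have hCpos : 0 < Cstar := by
    rw [hC]
    refine Finset.prod_pos fun j hj => Real.rpow_pos_of_pos ?_ _
    have := hlt ⟨j, by simpa [hp] using hj⟩
    simp only at this; linarith
  have hLpos : 0 < L := by rw [hLval]; positivity
  have hlim2 := hlim.div_const L
  rw [div_self hLpos.ne'] at hlim2
  refine hlim2.congr' ?_
  filter_upwards [eventually_gt_atTop 0] with u hu
  rw [prob_formula P d hd A R U hRmeas hRpos hU hInd X hX F hF lam (lam 0) hlam hlam0 p ⟨0, rfl⟩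
    (fun i hi => hi) u hu, hm', ← hk, hLval]
  have hdm : (d : ℝ) - m = k := by linarith
  have e1 : u ^ (τ * ((m : ℝ) - d) / 2 + N) = u ^ (-(τ / 2) * (k : ℝ)) * u ^ N := by
    rw [← Real.rpow_add hu]; congr 1; rw [← hdm]; ring
  have e2 : Real.pi ^ (-(k : ℝ) / 2) = (Real.pi ^ ((k : ℝ) / 2))⁻¹ := by
    rw [← Real.rpow_neg hpi.le]; congr 1; ring
  rw [e1, e2, hdm]
  beta_reduce
  generalize (∫ w : {j // ¬ p j} → ℝ,
        (1 - F (u / Real.sqrt ((1 + ∑ j : {i // ¬ p i}, lam j / lam 0 * w j ^ 2) / (1 + w ⬝ᵥ w)))) *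
        (1 + w ⬝ᵥ w) ^ (-(d : ℝ) / 2)) = I
  have p1 := Real.rpow_pos_of_pos hu (-(τ / 2) * (k : ℝ))
  have p2 := Real.rpow_pos_of_pos hu N
  have p3 := Real.exp_pos (-δ * u ^ τ)
  have p4 : 0 < Real.pi ^ ((k : ℝ) / 2) := by positivity
  have p5 : 0 < (2 / (δ * τ)) ^ ((k : ℝ) / 2) := by positivity
  generalize u ^ (-(τ / 2) * (k : ℝ)) = x1 at *
  generalize Real.exp (-δ * u ^ τ) = x3 at *
  generalize u ^ N = x2 at *
  generalize Real.pi ^ ((k : ℝ) / 2) = x4 at *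
  generalize (2 / (δ * τ)) ^ ((k : ℝ) / 2) = x5 at *
  field_simp
end
end
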